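/- Let X be a cyclic finite-dimensional smooth T-module and M a TS-module of finite length and degree one. Then every TS-morphism φ : 𝔼[X] → M either has finite-dimensional image contained in κ(M) = M^S, or is injective. If φ is injective, then the induced map π_0(φ) : π_0(𝔼[X]) → π_0(M) is injective and the cokernel of φ is isomorphic to the cokernel of π_0(φ). -/

import Mathlib

noncomputable section

open scoped Classical

namespace PSW

/-! ### The affine group `λ.b : x ↦ λ·x + b` over a field `K`. -/

@[ext]
structure Aff (K : Type*) [Field K] where
  t : Kˣ
  s : K

namespace Aff

variable {K : Type*} [Field K]

instance : Mul (Aff K) := ⟨fun g h => ⟨g.t * h.t, g.s + (g.t : K) * h.s⟩⟩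
instance : One (Aff K) := ⟨⟨1, 0⟩⟩
instance : Inv (Aff K) := ⟨fun g => ⟨g.t⁻¹, -(((g.t⁻¹ : Kˣ) : K) * g.s)⟩⟩

@[simp] lemma mul_t (g h : Aff K) : (g * h).t = g.t * h.t := rfl
@[simp] lemma mul_s (g h : Aff K) : (g * h).s = g.s + (g.t : K) * h.s := rfl
@[simp] lemma one_t : (1 : Aff K).t = 1 := rfl
@[simp] lemma one_s : (1 : Aff K).s = 0 := rfl
@[simp] lemma inv_t (g : Aff K) : (g⁻¹).t = g.t⁻¹ := rfl
@[simp] lemma inv_s (g : Aff K) : (g⁻¹).s = -(((g.t⁻¹ : Kˣ) : K) * g.s) := rfl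

instance : Group (Aff K) where
  mul_assoc a b c := by
    ext
    · simp [mul_assoc]
    · simp only [mul_s, mul_t, Units.val_mul]; ring
  one_mul a := by ext <;> simp
  mul_one a := by ext <;> simp
  inv_mul_cancel a := by
    ext
    · simp
    · simp

/-- The element `x_λ` of the group `TS`. -/
def xT (u : Kˣ) : Aff K := ⟨u, 0⟩

/-- The element `s_b` of the group `TS`. -/
def sS (b : K) : Aff K := ⟨1, b⟩

@[simp] lemma xT_t (u : Kˣ) : (xT u : Aff K).t = u := rfl
@[simp] lemma xT_s (u : Kˣ) : (xT u : Aff K).s = 0 := rfl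
@[simp] lemma sS_t (b : K) : (sS b : Aff K).t = 1 := rfl
@[simp] lemma sS_s (b : K) : (sS b : Aff K).s = b := rfl

/-- `T ≅ k^×` as a subgroup of `TS`. -/
def xTHom : Kˣ →* Aff K where
  toFun := xT
  map_one' := rfl
  map_mul' u v := by ext <;> simp [xT]

@[simp] lemma xTHom_apply (u : Kˣ) : (xTHom u : Aff K) = xT u := rfl

lemma mul_sS (g : Aff K) (b : K) : g * sS b = sS ((g.t : K) * b) * g := by
  ext
  · simp
  · simp [add_comm]

lemma sS_mul (b : K) (g : Aff K) : sS b * g = g * sS (((g.t⁻¹ : Kˣ) : K) * b) := by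
  ext
  · simp
  · simp [Units.mul_inv_cancel_left, add_comm]

lemma aff_decomp (g : Aff K) : g = xT g.t * sS (((g.t⁻¹ : Kˣ) : K) * g.s) := by
  ext
  · simp
  · simp [Units.mul_inv_cancel_left]

instance [TopologicalSpace K] : TopologicalSpace (Aff K) :=
  TopologicalSpace.induced (fun g : Aff K => ((g.t, g.s) : Kˣ × K)) inferInstance

end Aff

/-! ### Generalities on representations of a monoid on complex vector spaces. -/

namespace GRep

variable {G : Type*} [Monoid G]

section MonoidModules

variable {V W : Type*} [AddCommMonoid V] [Module ℂ V] [AddCommMonoid W] [Module ℂ W]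

/-- A submodule invariant under the representation. -/
def Invariant (ρ : Representation ℂ G V) (U : Submodule ℂ V) : Prop :=
  ∀ (g : G) (v : V), v ∈ U → ρ g v ∈ U

/-- Equivariance of a linear map with respect to two representations. -/
def Equivariant (ρ : Representation ℂ G V) (σ : Representation ℂ G W) (f : V →ₗ[ℂ] W) : Prop :=
  ∀ (g : G) (v : V), f (ρ g v) = σ g (f v)

/-- Isomorphism of representations. -/
def Iso (ρ : Representation ℂ G V) (σ : Representation ℂ G W) : Prop :=
  ∃ e : V ≃ₗ[ℂ] W, ∀ (g : G) (v : V), e (ρ g v) = σ g (e v)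

/-- Irreducibility. -/
def Irred (ρ : Representation ℂ G V) : Prop :=
  Nontrivial V ∧ ∀ U : Submodule ℂ V, Invariant ρ U → U = ⊥ ∨ U = ⊤

/-- Subrepresentation on an invariant submodule. -/
def sub (ρ : Representation ℂ G V) {U : Submodule ℂ V} (hU : Invariant ρ U) :
    Representation ℂ G ↥U where
  toFun g := (ρ g).restrict fun v hv => hU g v hv
  map_one' := by
    apply LinearMap.ext; intro v; apply Subtype.ext
    simp [LinearMap.restrict_apply]
  map_mul' g h := by
    apply LinearMap.ext; intro v; apply Subtype.ext
    simp [LinearMap.restrict_apply]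

@[simp] lemma sub_apply (ρ : Representation ℂ G V) {U : Submodule ℂ V} (hU : Invariant ρ U)
    (g : G) (v : ↥U) : ((sub ρ hU g v : ↥U) : V) = ρ g (v : V) := rfl

lemma ker_invariant (ρ : Representation ℂ G V) (σ : Representation ℂ G W)
    (f : V →ₗ[ℂ] W) (hf : Equivariant ρ σ f) : Invariant ρ (LinearMap.ker f) := by
  intro g v hv
  rw [LinearMap.mem_ker] at hv ⊢
  rw [hf g v, hv, map_zero]

lemma range_invariant (ρ : Representation ℂ G V) (σ : Representation ℂ G W)
    (f : V →ₗ[ℂ] W) (hf : Equivariant ρ σ f) : Invariant σ (LinearMap.range f) := by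
  rintro g w ⟨v, rfl⟩
  exact ⟨ρ g v, hf g v⟩

lemma map_invariant (ρ : Representation ℂ G V) (σ : Representation ℂ G W)
    (f : V →ₗ[ℂ] W) (hf : Equivariant ρ σ f) (U : Submodule ℂ V) (hU : Invariant ρ U) :
    Invariant σ (U.map f) := by
  rintro g w ⟨v, hv, rfl⟩
  exact ⟨ρ g v, hU g v hv, hf g v⟩

end MonoidModules

section GroupModules

variable {V W : Type*} [AddCommGroup V] [Module ℂ V] [AddCommGroup W] [Module ℂ W]

/-- Quotient representation. -/
def quot (ρ : Representation ℂ G V) (U : Submodule ℂ V) (hU : Invariant ρ U) :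
    Representation ℂ G (V ⧸ U) where
  toFun g := U.mapQ U (ρ g) fun v hv => hU g v hv
  map_one' := by
    apply LinearMap.ext; intro x
    obtain ⟨v, rfl⟩ := Submodule.Quotient.mk_surjective U x
    simp [Submodule.mapQ_apply]
  map_mul' g h := by
    apply LinearMap.ext; intro x
    obtain ⟨v, rfl⟩ := Submodule.Quotient.mk_surjective U x
    simp [Submodule.mapQ_apply]

@[simp] lemma quot_apply (ρ : Representation ℂ G V) (U : Submodule ℂ V) (hU : Invariant ρ U)
    (g : G) (v : V) :
    quot ρ U hU g (Submodule.Quotient.mk v) = Submodule.Quotient.mk (ρ g v) := rfl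

/-- Subquotient representation on `B/A`. -/
def subquot (ρ : Representation ℂ G V) {A B : Submodule ℂ V}
    (hA : Invariant ρ A) (hB : Invariant ρ B) :
    Representation ℂ G (↥B ⧸ A.comap B.subtype) :=
  quot (sub ρ hB) (A.comap B.subtype) fun g v hv => hA g v.1 hv

lemma mkQ_equivariant (ρ : Representation ℂ G V) (U : Submodule ℂ V) (hU : Invariant ρ U) :
    Equivariant ρ (quot ρ U hU) U.mkQ := by
  intro g v
  show Submodule.Quotient.mk (ρ g v) = quot ρ U hU g (Submodule.Quotient.mk v)
  rw [quot_apply]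

end GroupModules

end GRep

/-! ### TS-modules: representations of the affine group. -/

/-- A `TS`-module structure on `V` is a representation of the group `TS ≅ Gl_a(1)`. -/
abbrev Rep (K : Type*) [Field K] (V : Type*) [AddCommGroup V] [Module ℂ V] :=
  Representation ℂ (Aff K) V

section RepDefs

open Aff

variable {K : Type*} [Field K]
variable {V W : Type*} [AddCommGroup V] [Module ℂ V] [AddCommGroup W] [Module ℂ W]

/-- Smoothness: every vector has open stabilizer. -/
def IsSmoothRep [TopologicalSpace K] (ρ : Rep K V) : Prop :=
  ∀ v : V, IsOpen {g : Aff K | ρ g v = v}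

/-- Smoothness of a `T`-module, i.e. of a representation of `T ≅ k^×`. -/
def TIsSmooth {X : Type*} [AddCommMonoid X] [Module ℂ X] [TopologicalSpace K]
    (τ : Representation ℂ Kˣ X) : Prop :=
  ∀ x : X, IsOpen {u : Kˣ | τ u x = x}

/-- Smooth character of `T ≅ k^×` (open kernel, equivalently locally constant). -/
def SmoothMulChar [TopologicalSpace K] (χ : Kˣ →* ℂˣ) : Prop :=
  IsOpen {u : Kˣ | χ u = 1}

/-- The space `V^S` of `S`-invariants. -/
def sInv (ρ : Rep K V) : Submodule ℂ V where
  carrier := {v | ∀ b : K, ρ (sS b) v = v}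
  zero_mem' := fun b => map_zero _
  add_mem' {a b} ha hb := fun c => by rw [map_add, ha c, hb c]
  smul_mem' c v hv := fun b => by rw [map_smul, hv b]

@[simp] lemma mem_sInv (ρ : Rep K V) (v : V) :
    v ∈ sInv ρ ↔ ∀ b : K, ρ (sS b) v = v := Iff.rfl

/-- The `χ`-eigenspace `X^{T,χ}` of a `T`-module. -/
def tEigenT {X : Type*} [AddCommMonoid X] [Module ℂ X]
    (τ : Representation ℂ Kˣ X) (χ : Kˣ →* ℂˣ) : Submodule ℂ X where
  carrier := {x | ∀ u : Kˣ, τ u x = (χ u : ℂ) • x}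
  zero_mem' := fun u => by simp
  add_mem' {a b} ha hb := fun u => by rw [map_add, ha u, hb u, smul_add]
  smul_mem' c x hx := fun u => by rw [map_smul, hx u]; exact smul_comm c ((χ u : ℂ)) x

@[simp] lemma mem_tEigenT {X : Type*} [AddCommMonoid X] [Module ℂ X]
    (τ : Representation ℂ Kˣ X) (χ : Kˣ →* ℂˣ) (x : X) :
    x ∈ tEigenT τ χ ↔ ∀ u : Kˣ, τ u x = (χ u : ℂ) • x := Iff.rfl

/-- The `χ`-eigenspace `V^{T,χ}` of a `TS`-module. -/
def tEigen (ρ : Rep K V) (χ : Kˣ →* ℂˣ) : Submodule ℂ V := tEigenT (ρ.comp xTHom) χ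

/-- The kernel of the projection to the `S`-coinvariants `V_S`. -/
def sCoinvKer (ρ : Rep K V) : Submodule ℂ V :=
  Submodule.span ℂ {w : V | ∃ (b : K) (v : V), w = ρ (sS b) v - v}

/-- The kernel of the projection to the twisted coinvariants `V_{S,ψ'}`. -/
def sTwistKer (ρ : Rep K V) (ψ' : AddChar K ℂ) : Submodule ℂ V :=
  Submodule.span ℂ {w : V | ∃ (b : K) (v : V), w = ρ (sS b) v - ψ' b • v}

/-- The kernel of the projection to the `χ`-coinvariants `X_{T,χ}` of a `T`-module. -/
def tTwistKerT {X : Type*} [AddCommGroup X] [Module ℂ X]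
    (τ : Representation ℂ Kˣ X) (χ : Kˣ →* ℂˣ) : Submodule ℂ X :=
  Submodule.span ℂ {w : X | ∃ (u : Kˣ) (x : X), w = τ u x - (χ u : ℂ) • x}

/-- The kernel of the projection to the `χ`-coinvariants `V_{T,χ}` of a `TS`-module. -/
def tTwistKer (ρ : Rep K V) (χ : Kˣ →* ℂˣ) : Submodule ℂ V := tTwistKerT (ρ.comp xTHom) χ

lemma sCoinvKer_invariant (ρ : Rep K V) : GRep.Invariant ρ (sCoinvKer ρ) := by
  intro g v hv
  have h : sCoinvKer ρ ≤ Submodule.comap (ρ g) (sCoinvKer ρ) := by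
    refine Submodule.span_le.2 ?_
    rintro w ⟨b, v', rfl⟩
    simp only [SetLike.mem_coe, Submodule.mem_comap, map_sub]
    have h1 : ρ g (ρ (sS b) v') = ρ (sS ((g.t : K) * b)) (ρ g v') := by
      rw [← Module.End.mul_apply, ← map_mul, mul_sS, map_mul, Module.End.mul_apply]
    rw [h1]
    exact Submodule.subset_span ⟨(g.t : K) * b, ρ g v', rfl⟩
  exact h hv

lemma sInv_invariant (ρ : Rep K V) : GRep.Invariant ρ (sInv ρ) := by
  intro g v hv
  rw [mem_sInv] at hv ⊢
  intro b
  have h1 : ρ (sS b) (ρ g v) = ρ g (ρ (sS (((g.t⁻¹ : Kˣ) : K) * b)) v) := by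
    rw [← Module.End.mul_apply, ← map_mul, sS_mul, map_mul, Module.End.mul_apply]
  rw [h1, hv _]

/-- The `S`-coinvariants `π₀(V) = V_S` as a `TS`-module (`S` acting trivially). -/
def piZeroRep (ρ : Rep K V) : Rep K (V ⧸ sCoinvKer ρ) :=
  GRep.quot ρ (sCoinvKer ρ) (sCoinvKer_invariant ρ)

/-- The `S`-coinvariants `π₀(V) = V_S` as a `T`-module. -/
def piZeroT (ρ : Rep K V) : Representation ℂ Kˣ (V ⧸ sCoinvKer ρ) :=
  (piZeroRep ρ).comp xTHom

/-- The `T`-module structure on `κ(V) = V^S`. -/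
def sInvT (ρ : Rep K V) : Representation ℂ Kˣ ↥(sInv ρ) :=
  (GRep.sub ρ (sInv_invariant ρ)).comp xTHom

/-- A `TS`-module is perfect if all its eigenspaces `V^{T,χ}` for smooth `χ` vanish. -/
def Perfect [TopologicalSpace K] (ρ : Rep K V) : Prop :=
  ∀ χ : Kˣ →* ℂˣ, SmoothMulChar χ → tEigen ρ χ = ⊥

/-- A finite-dimensional `T`-module is cyclic if each generalized eigenspace is a single
Jordan block; equivalently all eigenspaces `X^{T,χ}` have dimension at most one. -/
def TCyclic {X : Type*} [AddCommGroup X] [Module ℂ X]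
    (τ : Representation ℂ Kˣ X) : Prop :=
  ∀ χ : Kˣ →* ℂˣ, Module.finrank ℂ ↥(tEigenT τ χ) ≤ 1

lemma sCoinvKer_le_comap (ρ : Rep K V) (σ : Rep K W)
    (f : V →ₗ[ℂ] W) (hf : GRep.Equivariant ρ σ f) :
    sCoinvKer ρ ≤ (sCoinvKer σ).comap f := by
  refine Submodule.span_le.2 ?_
  rintro w ⟨b, v, rfl⟩
  simp only [SetLike.mem_coe, Submodule.mem_comap, map_sub]
  rw [hf]
  exact Submodule.subset_span ⟨b, f v, rfl⟩

/-- The map induced by an equivariant map on the `S`-coinvariants `π₀`. -/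
def piZeroMap (ρ : Rep K V) (σ : Rep K W) (f : V →ₗ[ℂ] W) (hf : GRep.Equivariant ρ σ f) :
    (V ⧸ sCoinvKer ρ) →ₗ[ℂ] (W ⧸ sCoinvKer σ) :=
  Submodule.mapQ _ _ f (sCoinvKer_le_comap ρ σ f hf)

lemma piZeroMap_equivariant (ρ : Rep K V) (σ : Rep K W) (f : V →ₗ[ℂ] W)
    (hf : GRep.Equivariant ρ σ f) :
    GRep.Equivariant (piZeroRep ρ) (piZeroRep σ) (piZeroMap ρ σ f hf) := by
  intro g x
  obtain ⟨v, rfl⟩ := Submodule.Quotient.mk_surjective _ x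
  show piZeroMap ρ σ f hf (piZeroRep ρ g (Submodule.Quotient.mk v))
      = piZeroRep σ g (piZeroMap ρ σ f hf (Submodule.Quotient.mk v))
  rw [show piZeroRep ρ g (Submodule.Quotient.mk v) = Submodule.Quotient.mk (ρ g v) from rfl]
  rw [show piZeroMap ρ σ f hf (Submodule.Quotient.mk v) = Submodule.Quotient.mk (f v) from rfl]
  rw [show piZeroMap ρ σ f hf (Submodule.Quotient.mk (ρ g v))
      = Submodule.Quotient.mk (f (ρ g v)) from rfl]
  rw [show piZeroRep σ g (Submodule.Quotient.mk (f v)) = Submodule.Quotient.mk (σ g (f v)) from rfl]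
  rw [hf]

lemma kappaImg_invariant (ρ : Rep K V) :
    GRep.Invariant (piZeroT ρ) ((sInv ρ).map (sCoinvKer ρ).mkQ) := by
  rintro u w ⟨v, hv, rfl⟩
  refine ⟨ρ (xT u) v, sInv_invariant ρ (xT u) v hv, ?_⟩
  rfl

end RepDefs

/-! ### Composition series and degree. -/

/-- A composition series for a `TS`-module, witnessing finite length: a maximal chain of
invariant submodules (the subquotients are then irreducible). -/
structure CompSeries {K : Type*} [Field K] {V : Type*} [AddCommGroup V] [Module ℂ V]
    (ρ : Rep K V) where
  n : ℕ
  W : ℕ → Submodule ℂ V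
  bot : W 0 = ⊥
  top : W n = ⊤
  inv : ∀ i, GRep.Invariant ρ (W i)
  lt : ∀ i < n, W i < W (i + 1)
  maximal : ∀ i < n, ∀ C : Submodule ℂ V, GRep.Invariant ρ C → W i ≤ C → C ≤ W (i + 1) →
    C = W i ∨ C = W (i + 1)

/-- The number of Jordan–Hölder constituents of a composition series isomorphic to a given
representation `σ` (applied with `σ = 𝕊`, this is the degree). -/
def CompSeries.deg {K : Type*} [Field K] {V : Type*} [AddCommGroup V] [Module ℂ V]
    {ρ : Rep K V} (c : CompSeries ρ) {W₀ : Type*} [AddCommMonoid W₀] [Module ℂ W₀]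
    (σ : Representation ℂ (Aff K) W₀) : ℕ :=
  (Finset.univ.filter fun i : Fin c.n =>
    GRep.Iso (GRep.subquot ρ (c.inv i.1) (c.inv (i.1 + 1))) σ).card

/-! ### Fiber products of a `T`-module with a `TS`-module over a `T`-module. -/

section Fiber

open Aff

variable {K : Type*} [Field K]
variable {X Y E : Type*} [AddCommGroup X] [Module ℂ X] [AddCommGroup Y] [Module ℂ Y]
  [AddCommGroup E] [Module ℂ E]

/-- The product `TS`-module `X × E` where `S` acts trivially on the `T`-module `X`. -/
def prodRepTE (τ : Representation ℂ Kˣ X) (ρ : Rep K E) : Rep K (X × E) where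
  toFun g := (τ g.t).prodMap (ρ g)
  map_one' := by
    apply LinearMap.ext; rintro ⟨x, v⟩
    simp
  map_mul' g h := by
    apply LinearMap.ext; rintro ⟨x, v⟩
    simp [map_mul]

/-- The underlying space of the fiber product `𝔼[f] = X ×_Y E`. -/
def fiberKer (f : X →ₗ[ℂ] Y) (q : E →ₗ[ℂ] Y) : Submodule ℂ (X × E) :=
  LinearMap.ker (f.comp (LinearMap.fst ℂ X E) - q.comp (LinearMap.snd ℂ X E))

lemma mem_fiberKer (f : X →ₗ[ℂ] Y) (q : E →ₗ[ℂ] Y) (p : X × E) :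
    p ∈ fiberKer f q ↔ f p.1 = q p.2 := by
  simp [fiberKer, sub_eq_zero]

lemma fiber_invariant (τX : Representation ℂ Kˣ X) (ρE : Rep K E)
    (τY : Representation ℂ Kˣ Y) (f : X →ₗ[ℂ] Y) (q : E →ₗ[ℂ] Y)
    (hf : ∀ (u : Kˣ) (x : X), f (τX u x) = τY u (f x))
    (hq : sCoinvKer ρE ≤ LinearMap.ker q)
    (hqT : ∀ (u : Kˣ) (v : E), q (ρE (xT u) v) = τY u (q v)) :
    GRep.Invariant (prodRepTE τX ρE) (fiberKer f q) := by
  intro g p hp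
  rw [mem_fiberKer] at hp ⊢
  have hsb : q (ρE (sS (((g.t⁻¹ : Kˣ) : K) * g.s)) p.2) = q p.2 := by
    have h1 : ρE (sS (((g.t⁻¹ : Kˣ) : K) * g.s)) p.2 - p.2 ∈ sCoinvKer ρE :=
      Submodule.subset_span ⟨_, _, rfl⟩
    have h2 := hq h1
    rw [LinearMap.mem_ker, map_sub, sub_eq_zero] at h2
    exact h2
  have hdecomp : ρE g p.2 = ρE (xT g.t) (ρE (sS (((g.t⁻¹ : Kˣ) : K) * g.s)) p.2) := by
    conv_lhs => rw [aff_decomp g]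
    rw [map_mul, Module.End.mul_apply]
  have h1 : ((prodRepTE τX ρE) g p).1 = τX g.t p.1 := rfl
  have h2 : ((prodRepTE τX ρE) g p).2 = ρE g p.2 := rfl
  rw [h1, h2, hf, hp, hdecomp, hqT, hsb]

end Fiber

/-! ### Jordan blocks of finite-dimensional `T`-modules. -/

section Jordan

variable {K : Type*} [Field K]
variable {X : Type*} [AddCommGroup X] [Module ℂ X]

/-- A Jordan block of a `T`-module: a nonzero indecomposable invariant direct summand. -/
def IsJordanBlock (τ : Representation ℂ Kˣ X) (J : Submodule ℂ X) : Prop :=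
  J ≠ ⊥ ∧ GRep.Invariant τ J ∧ (∃ C : Submodule ℂ X, GRep.Invariant τ C ∧ IsCompl J C) ∧
    ∀ A B : Submodule ℂ X, GRep.Invariant τ A → GRep.Invariant τ B → A ≤ J → B ≤ J →
      A ⊓ B = ⊥ → A ⊔ B = J → A = ⊥ ∨ B = ⊥

end Jordan

/-! ### Invariants and coinvariants for a normal subgroup of an arbitrary group. -/

section Grp

variable {Γ : Type*} [Group Γ]
variable {V W : Type*} [AddCommGroup V] [Module ℂ V] [AddCommGroup W] [Module ℂ W]

/-- Invariants `V^N` under a subgroup `N`. -/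
def grpInv (ρ : Representation ℂ Γ V) (N : Subgroup Γ) : Submodule ℂ V where
  carrier := {v | ∀ n ∈ N, ρ n v = v}
  zero_mem' := fun n _ => map_zero _
  add_mem' {a b} ha hb := fun n hn => by rw [map_add, ha n hn, hb n hn]
  smul_mem' c v hv := fun n hn => by rw [map_smul, hv n hn]

@[simp] lemma mem_grpInv (ρ : Representation ℂ Γ V) (N : Subgroup Γ) (v : V) :
    v ∈ grpInv ρ N ↔ ∀ n ∈ N, ρ n v = v := Iff.rfl

/-- The kernel of the projection to the coinvariants `V_N` under a subgroup `N`. -/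
def grpCoinvKer (ρ : Representation ℂ Γ V) (N : Subgroup Γ) : Submodule ℂ V :=
  Submodule.span ℂ {w : V | ∃ n ∈ N, ∃ v : V, w = ρ n v - v}

lemma grpInv_invariant (ρ : Representation ℂ Γ V) (N : Subgroup Γ) [hN : N.Normal] :
    GRep.Invariant ρ (grpInv ρ N) := by
  intro γ v hv
  rw [mem_grpInv] at hv ⊢
  intro n hn
  have hmem : γ⁻¹ * n * γ ∈ N := by
    have := hN.conj_mem n hn γ⁻¹
    simpa using this
  have key : ρ n (ρ γ v) = ρ γ (ρ (γ⁻¹ * n * γ) v) := by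
    rw [← Module.End.mul_apply, ← map_mul, ← Module.End.mul_apply, ← map_mul]
    congr 1
    group
  rw [key, hv _ hmem]

lemma grpCoinvKer_invariant (ρ : Representation ℂ Γ V) (N : Subgroup Γ) [hN : N.Normal] :
    GRep.Invariant ρ (grpCoinvKer ρ N) := by
  intro γ v hv
  have h : grpCoinvKer ρ N ≤ Submodule.comap (ρ γ) (grpCoinvKer ρ N) := by
    refine Submodule.span_le.2 ?_
    rintro w ⟨n, hn, v', rfl⟩
    simp only [SetLike.mem_coe, Submodule.mem_comap, map_sub]
    have key : ρ γ (ρ n v') = ρ (γ * n * γ⁻¹) (ρ γ v') := by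
      rw [← Module.End.mul_apply, ← map_mul, ← Module.End.mul_apply, ← map_mul]
      congr 1
      group
    rw [key]
    exact Submodule.subset_span ⟨γ * n * γ⁻¹, hN.conj_mem n hn γ, ρ γ v', rfl⟩
  exact h hv

/-- The map induced on `N`-invariants by an equivariant map. -/
def grpInvRestrict (ρ : Representation ℂ Γ V) (σ : Representation ℂ Γ W) (N : Subgroup Γ)
    (f : V →ₗ[ℂ] W) (hf : GRep.Equivariant ρ σ f) : ↥(grpInv ρ N) →ₗ[ℂ] ↥(grpInv σ N) :=
  f.restrict (fun v hv => by
    rw [mem_grpInv] at hv ⊢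
    intro n hn
    rw [← hf n v, hv n hn])

lemma grpCoinvKer_le_comap (ρ : Representation ℂ Γ V) (σ : Representation ℂ Γ W) (N : Subgroup Γ)
    (f : V →ₗ[ℂ] W) (hf : GRep.Equivariant ρ σ f) :
    grpCoinvKer ρ N ≤ (grpCoinvKer σ N).comap f := by
  refine Submodule.span_le.2 ?_
  rintro w ⟨n, hn, v, rfl⟩
  simp only [SetLike.mem_coe, Submodule.mem_comap, map_sub]
  rw [hf]
  exact Submodule.subset_span ⟨n, hn, f v, rfl⟩

/-- The map induced on `N`-coinvariants by an equivariant map. -/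
def grpCoinvMap (ρ : Representation ℂ Γ V) (σ : Representation ℂ Γ W) (N : Subgroup Γ)
    (f : V →ₗ[ℂ] W) (hf : GRep.Equivariant ρ σ f) :
    (V ⧸ grpCoinvKer ρ N) →ₗ[ℂ] (W ⧸ grpCoinvKer σ N) :=
  Submodule.mapQ _ _ f (grpCoinvKer_le_comap ρ σ N f hf)

end Grp

/-! ### Tate L-factors of finite-dimensional `T`-modules. -/

section Lfactor

variable {K : Type*} [NontriviallyNormedField K]
variable {X : Type*} [AddCommGroup X] [Module ℂ X]

/-- The part of a `T`-module where the `χ`-twisted action is unramified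
(trivial on the norm-one units). -/
def unrPart (τ : Representation ℂ Kˣ X) (χ : Kˣ →* ℂˣ) : Submodule ℂ X where
  carrier := {x | ∀ u : Kˣ, ‖(u : K)‖ = 1 → (χ u : ℂ) • τ u x = x}
  zero_mem' := fun u _ => by simp
  add_mem' {a b} ha hb := fun u hu => by rw [map_add, smul_add, ha u hu, hb u hu]
  smul_mem' c x hx := fun u hu => by
    rw [map_smul, smul_comm, hx u hu]

lemma unrPart_stable (τ : Representation ℂ Kˣ X) (χ : Kˣ →* ℂˣ) (ϖ : Kˣ) :
    ∀ x ∈ unrPart τ χ, ((χ ϖ : ℂ) • τ ϖ) x ∈ unrPart τ χ := by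
  intro x hx u hu
  have comm : τ u (τ ϖ x) = τ ϖ (τ u x) := by
    rw [← Module.End.mul_apply, ← map_mul, mul_comm, map_mul, Module.End.mul_apply]
  calc (χ u : ℂ) • τ u (((χ ϖ : ℂ) • τ ϖ) x)
      = (χ ϖ : ℂ) • ((χ u : ℂ) • τ u (τ ϖ x)) := by
        rw [LinearMap.smul_apply, map_smul, smul_comm]
    _ = (χ ϖ : ℂ) • τ ϖ ((χ u : ℂ) • τ u x) := by rw [comm, map_smul]
    _ = ((χ ϖ : ℂ) • τ ϖ) x := by rw [hx u hu, LinearMap.smul_apply]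

/-- The twisted uniformizer action on the unramified part. -/
def twistOp (τ : Representation ℂ Kˣ X) (χ : Kˣ →* ℂˣ) (ϖ : Kˣ) :
    ↥(unrPart τ χ) →ₗ[ℂ] ↥(unrPart τ χ) :=
  LinearMap.restrict ((χ ϖ : ℂ) • τ ϖ) (unrPart_stable τ χ ϖ)

/-- The Tate `L`-factor `L(s, χ ⊗ X) = det(1 - q^{-s}·(χ·τ)(ϖ) | X^{unr,χ})⁻¹` of a
(finite-dimensional) `T`-module `X`, relative to a uniformizer `ϖ`. -/
def Lfactor (τ : Representation ℂ Kˣ X) (χ : Kˣ →* ℂˣ) (ϖ : Kˣ) (s : ℂ) : ℂ :=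
  (LinearMap.det (LinearMap.id - (‖(ϖ : K)‖ : ℂ) ^ s • twistOp τ χ ϖ))⁻¹

end Lfactor

/-! ### The concrete `TS`-modules `𝕊`, `C_c^∞(k)`, `C_b^∞(k^×)` and `𝔼[χ]`. -/

section Concrete

open Aff

variable (K : Type*) [NontriviallyNormedField K]

/-- The representation of `TS` on functions on `k^×`:
`(s_b g)(x) = ψ(bx) g(x)`, `(x_λ g)(x) = g(xλ)`. -/
def repCx (ψ : AddChar K ℂ) : Rep K (Kˣ → ℂ) where
  toFun g :=
    { toFun := fun f x => ψ (g.s * (x : K)) * f (x * g.t)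
      map_add' := fun f₁ f₂ => by funext x; simp [mul_add]
      map_smul' := fun c f => by
        funext x
        simp only [Pi.smul_apply, smul_eq_mul, RingHom.id_apply]
        ring }
  map_one' := by
    apply LinearMap.ext; intro f; funext x
    simp
  map_mul' g h := by
    apply LinearMap.ext; intro f; funext x
    show ψ ((g.s + (g.t : K) * h.s) * (x : K)) * f (x * (g.t * h.t))
        = ψ (g.s * (x : K)) * (ψ (h.s * ((x * g.t : Kˣ) : K)) * f (x * g.t * h.t))
    have harg : (g.s + (g.t : K) * h.s) * (x : K)
        = g.s * (x : K) + h.s * ((x * g.t : Kˣ) : K) := by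
      push_cast
      ring
    rw [harg, AddChar.map_add_eq_mul, ← mul_assoc x g.t h.t]
    ring

@[simp] lemma repCx_apply (ψ : AddChar K ℂ) (g : Aff K) (f : Kˣ → ℂ) (x : Kˣ) :
    repCx K ψ g f x = ψ (g.s * (x : K)) * f (x * g.t) := rfl

/-- The `χ`-twisted representation of `TS` on functions on `k`:
`(s_b g)(x) = ψ(bx) g(x)`, `(x_λ g)(x) = χ(λ) g(xλ)`.  (Take `χ = 1` for the
untwisted action on `C_c^∞(k)`; the module `𝔼[χ]` is `C_c^∞(k)` with the twisted action.) -/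
def repCc (ψ : AddChar K ℂ) (χ : Kˣ →* ℂˣ) : Rep K (K → ℂ) where
  toFun g :=
    { toFun := fun f x => (χ g.t : ℂ) * ψ (g.s * x) * f (x * (g.t : K))
      map_add' := fun f₁ f₂ => by funext x; simp [mul_add]
      map_smul' := fun c f => by
        funext x
        simp only [Pi.smul_apply, smul_eq_mul, RingHom.id_apply]
        ring }
  map_one' := by
    apply LinearMap.ext; intro f; funext x
    simp
  map_mul' g h := by
    apply LinearMap.ext; intro f; funext x
    show (χ (g.t * h.t) : ℂ) * ψ ((g.s + (g.t : K) * h.s) * x) * f (x * ((g.t * h.t : Kˣ) : K))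
        = (χ g.t : ℂ) * ψ (g.s * x) * ((χ h.t : ℂ) * ψ (h.s * (x * (g.t : K)))
            * f (x * (g.t : K) * (h.t : K)))
    have harg : (g.s + (g.t : K) * h.s) * x = g.s * x + h.s * (x * (g.t : K)) := by ring
    have harg2 : x * ((g.t * h.t : Kˣ) : K) = x * (g.t : K) * (h.t : K) := by
      push_cast
      ring
    rw [harg, harg2, AddChar.map_add_eq_mul, map_mul]
    push_cast
    ring

@[simp] lemma repCc_apply (ψ : AddChar K ℂ) (χ : Kˣ →* ℂˣ) (g : Aff K) (f : K → ℂ) (x : K) :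
    repCc K ψ χ g f x = (χ g.t : ℂ) * ψ (g.s * x) * f (x * (g.t : K)) := rfl

/-- The one-dimensional `TS`-module `ℂ_χ` on which `S` acts trivially and `x_λ` by `χ(λ)`. -/
def chiRep (χ : Kˣ →* ℂˣ) : Rep K ℂ where
  toFun g := (χ g.t : ℂ) • LinearMap.id
  map_one' := by
    apply LinearMap.ext; intro c
    simp
  map_mul' g h := by
    apply LinearMap.ext; intro c
    simp only [mul_t, map_mul, LinearMap.smul_apply, LinearMap.id_apply, Module.End.mul_apply,
      Units.val_mul, smul_eq_mul]
    ring

/-- `C_c^∞(k)`: locally constant, compactly supported functions on `k`. -/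
def CcK : Submodule ℂ (K → ℂ) where
  carrier := {f | IsLocallyConstant f ∧ HasCompactSupport f}
  zero_mem' := ⟨IsLocallyConstant.const 0, by
    rw [hasCompactSupport_def]
    simp⟩
  add_mem' {a b} ha hb := ⟨ha.1.comp₂ hb.1 (· + ·), ha.2.add hb.2⟩
  smul_mem' c f hf := by
    refine ⟨?_, hf.2.mono (Function.support_const_smul_subset c f)⟩
    exact hf.1.comp (fun z => c * z)

@[simp] lemma mem_CcK (f : K → ℂ) :
    f ∈ CcK K ↔ IsLocallyConstant f ∧ HasCompactSupport f := Iff.rfl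

/-- `𝕊 = C_c^∞(k^×)`: locally constant, compactly supported functions on `k^×`. -/
def SSx : Submodule ℂ (Kˣ → ℂ) where
  carrier := {f | IsLocallyConstant f ∧ HasCompactSupport f}
  zero_mem' := ⟨IsLocallyConstant.const 0, by
    rw [hasCompactSupport_def]
    simp⟩
  add_mem' {a b} ha hb := ⟨ha.1.comp₂ hb.1 (· + ·), ha.2.add hb.2⟩
  smul_mem' c f hf := by
    refine ⟨?_, hf.2.mono (Function.support_const_smul_subset c f)⟩
    exact hf.1.comp (fun z => c * z)

@[simp] lemma mem_SSx (f : Kˣ → ℂ) :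
    f ∈ SSx K ↔ IsLocallyConstant f ∧ HasCompactSupport f := Iff.rfl

/-- `C_b^∞(k^×)`: locally constant functions on `k^×` whose support has compact closure
in `k`. -/
def Cb : Submodule ℂ (Kˣ → ℂ) where
  carrier := {f | IsLocallyConstant f ∧
    IsCompact (closure (((↑) : Kˣ → K) '' Function.support f))}
  zero_mem' := ⟨IsLocallyConstant.const 0, by simp⟩
  add_mem' {a b} ha hb := by
    refine ⟨ha.1.comp₂ hb.1 (· + ·), ?_⟩
    refine IsCompact.of_isClosed_subset (ha.2.union hb.2) isClosed_closure ?_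
    refine closure_minimal ?_ (ha.2.isClosed.union hb.2.isClosed)
    refine (Set.image_mono (Function.support_add _ _)).trans ?_
    rw [Set.image_union]
    exact Set.union_subset_union subset_closure subset_closure
  smul_mem' c f hf := by
    refine ⟨hf.1.comp (fun z => c * z), ?_⟩
    refine IsCompact.of_isClosed_subset hf.2 isClosed_closure ?_
    refine closure_mono ?_
    exact Set.image_mono (Function.support_const_smul_subset c f)

@[simp] lemma mem_Cb (f : Kˣ → ℂ) :
    f ∈ Cb K ↔ IsLocallyConstant f ∧
      IsCompact (closure (((↑) : Kˣ → K) '' Function.support f)) := Iff.rfl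

variable {K}

lemma SSx_invariant (ψ : AddChar K ℂ) (hψlc : IsLocallyConstant (⇑ψ)) :
    GRep.Invariant (repCx K ψ) (SSx K) := by
  rintro g f hf
  rw [mem_SSx] at hf ⊢
  obtain ⟨hlc, hcs⟩ := hf
  have heq : repCx K ψ g f
      = (fun x : Kˣ => ψ (g.s * (x : K))) * (f ∘ (Homeomorph.mulRight g.t)) := rfl
  constructor
  · rw [heq]
    refine IsLocallyConstant.mul ?_ ?_
    · exact hψlc.comp_continuous (continuous_const.mul Units.continuous_val)
    · exact hlc.comp_continuous (Homeomorph.mulRight g.t).continuous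
  · rw [heq]
    exact (hcs.comp_homeomorph (Homeomorph.mulRight g.t)).mul_left

lemma CcK_invariant (ψ : AddChar K ℂ) (hψlc : IsLocallyConstant (⇑ψ)) (χ : Kˣ →* ℂˣ) :
    GRep.Invariant (repCc K ψ χ) (CcK K) := by
  rintro g f hf
  rw [mem_CcK] at hf ⊢
  obtain ⟨hlc, hcs⟩ := hf
  have hne : ((g.t : Kˣ) : K) ≠ 0 := g.t.ne_zero
  have heq : repCc K ψ χ g f
      = (fun x : K => (χ g.t : ℂ) * ψ (g.s * x)) * (f ∘ (Homeomorph.mulRight₀ (g.t : K) hne)) :=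
    rfl
  constructor
  · rw [heq]
    refine IsLocallyConstant.mul ?_ ?_
    · exact ((hψlc.comp_continuous (continuous_const.mul continuous_id)).comp
        (fun z => (χ g.t : ℂ) * z))
    · exact hlc.comp_continuous (Homeomorph.mulRight₀ (g.t : K) hne).continuous
  · rw [heq]
    exact (hcs.comp_homeomorph (Homeomorph.mulRight₀ (g.t : K) hne)).mul_left

/-- The `TS`-module `𝕊 = C_c^∞(k^×)`. -/
def SRep (ψ : AddChar K ℂ) (hψlc : IsLocallyConstant (⇑ψ)) : Rep K ↥(SSx K) :=
  GRep.sub (repCx K ψ) (SSx_invariant ψ hψlc)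

/-- The `TS`-module `𝔼[χ]`, i.e. `C_c^∞(k)` with the `χ`-twisted action. -/
def ERep (ψ : AddChar K ℂ) (hψlc : IsLocallyConstant (⇑ψ)) (χ : Kˣ →* ℂˣ) : Rep K ↥(CcK K) :=
  GRep.sub (repCc K ψ χ) (CcK_invariant ψ hψlc χ)

/-- The `TS`-module `𝕊^s`, a direct sum of `s` copies of `𝕊`. -/
def SRepPow (ψ : AddChar K ℂ) (hψlc : IsLocallyConstant (⇑ψ)) (s : ℕ) :
    Rep K (Fin s → ↥(SSx K)) where
  toFun g := LinearMap.pi fun i => (SRep ψ hψlc g).comp (LinearMap.proj i)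
  map_one' := by
    apply LinearMap.ext; intro v; funext i
    simp
  map_mul' g h := by
    apply LinearMap.ext; intro v; funext i
    simp [map_mul]

/-- The submodule `E` of `C_b^∞(k^×)` consisting of functions which are `χ`-eigenvectors
modulo `𝕊`; the quotient `E/𝕊` is the `χ`-eigenspace of `C_b^∞(k^×)/𝕊`. -/
def quotEigen (ψ : AddChar K ℂ) (χ : Kˣ →* ℂˣ) : Submodule ℂ (Kˣ → ℂ) where
  carrier := {f | f ∈ Cb K ∧ ∀ u : Kˣ, repCx K ψ (Aff.xT u) f - (χ u : ℂ) • f ∈ SSx K}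
  zero_mem' := ⟨(Cb K).zero_mem, fun u => by simpa using (SSx K).zero_mem⟩
  add_mem' {a b} ha hb := by
    refine ⟨(Cb K).add_mem ha.1 hb.1, fun u => ?_⟩
    rw [map_add, smul_add, add_sub_add_comm]
    exact (SSx K).add_mem (ha.2 u) (hb.2 u)
  smul_mem' c f hf := by
    refine ⟨(Cb K).smul_mem c hf.1, fun u => ?_⟩
    rw [map_smul, smul_comm, ← smul_sub]
    exact (SSx K).smul_mem c (hf.2 u)

/-- Evaluation at `0 ∈ k`, realizing the quotient map `𝔼[χ] → ℂ_χ` with kernel `𝕊`. -/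
def ev0 : ↥(CcK K) →ₗ[ℂ] ℂ where
  toFun f := (f : K → ℂ) 0
  map_add' f g := rfl
  map_smul' c f := rfl

end Concrete

/-! ### The diagonal torus in GL(2). -/

section GL2

variable {K : Type*} [Field K]

/-- The diagonal element `diag(a, b)` of `GL(2, K)`. -/
def diagGL (a b : Kˣ) : Matrix.GeneralLinearGroup (Fin 2) K where
  val := Matrix.diagonal ![(a : K), (b : K)]
  inv := Matrix.diagonal ![((a : K))⁻¹, ((b : K))⁻¹]
  val_inv := by
    ext i j
    fin_cases i <;> fin_cases j <;>
      simp [Matrix.mul_apply, Fin.sum_univ_two, Matrix.diagonal, Matrix.one_apply,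
        a.ne_zero, b.ne_zero]
  inv_val := by
    ext i j
    fin_cases i <;> fin_cases j <;>
      simp [Matrix.mul_apply, Fin.sum_univ_two, Matrix.diagonal, Matrix.one_apply,
        a.ne_zero, b.ne_zero]

end GL2

section Aux
open Aff
variable {K : Type*} [NontriviallyNormedField K] [IsUltrametricDist K] [ProperSpace K]

/-- A finite system of representatives of the ball of radius `R` modulo the ball of radius `ε`. -/
structure IsReps (F : Finset K) (R ε : ℝ) : Prop where
  mem : ∀ b ∈ F, ‖b‖ ≤ R
  ex : ∀ b : K, ‖b‖ ≤ R → ∃ f ∈ F, ‖b - f‖ ≤ ε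
  uniq : ∀ f ∈ F, ∀ f' ∈ F, ‖f - f'‖ ≤ ε → f = f'

lemma norm_sub_le_of (x y z : K) {ε : ℝ} (h1 : ‖x - y‖ ≤ ε) (h2 : ‖y - z‖ ≤ ε) : ‖x - z‖ ≤ ε := by
  have := IsUltrametricDist.norm_add_le_max (x - y) (y - z)
  rw [sub_add_sub_cancel] at this
  exact this.trans (max_le h1 h2)

lemma norm_add_le_of (x y : K) {ε : ℝ} (h1 : ‖x‖ ≤ ε) (h2 : ‖y‖ ≤ ε) : ‖x + y‖ ≤ ε :=
  (IsUltrametricDist.norm_add_le_max x y).trans (max_le h1 h2)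

lemma exists_reps (R ε : ℝ) (hε : 0 < ε) : ∃ F : Finset K, IsReps F R ε := by
  obtain ⟨t, htR, htf, htc⟩ := (isCompact_closedBall (0 : K) R).finite_cover_balls hε
  have hin : ∀ x : K, x ∈ t → ∃ y, y ∈ t ∧ ‖x - y‖ ≤ ε := fun x hx => ⟨x, hx, by simp [hε.le]⟩
  let r : K → K := fun x => Classical.epsilon (fun y => y ∈ t ∧ ‖x - y‖ ≤ ε)
  have hr : ∀ x ∈ t, r x ∈ t ∧ ‖x - r x‖ ≤ ε := fun x hx => Classical.epsilon_spec (hin x hx)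
  have hrr : ∀ x y : K, ‖x - y‖ ≤ ε → r x = r y := by
    intro x y h
    have : (fun z => z ∈ t ∧ ‖x - z‖ ≤ ε) = (fun z => z ∈ t ∧ ‖y - z‖ ≤ ε) := by
      funext z
      have h' : ‖y - x‖ ≤ ε := by rwa [norm_sub_rev]
      exact propext ⟨fun hz => ⟨hz.1, norm_sub_le_of _ _ _ h' hz.2⟩,
        fun hz => ⟨hz.1, norm_sub_le_of _ _ _ h hz.2⟩⟩
    show Classical.epsilon _ = Classical.epsilon _
    rw [this]
  refine ⟨htf.toFinset.image r, ?_, ?_, ?_⟩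
  · intro b hb
    simp only [Finset.mem_image, Set.Finite.mem_toFinset] at hb
    obtain ⟨x, hx, rfl⟩ := hb
    simpa using htR (hr x hx).1
  · intro b hb
    have : b ∈ ⋃ x ∈ t, Metric.ball x ε := htc (by simpa using hb)
    simp only [Set.mem_iUnion, Metric.mem_ball, dist_eq_norm, exists_prop] at this
    obtain ⟨x, hx, hbx⟩ := this
    exact ⟨r x, Finset.mem_image_of_mem _ (by simpa using hx),
      norm_sub_le_of _ _ _ hbx.le (hr x hx).2⟩
  · intro f hf f' hf' h
    simp only [Finset.mem_image, Set.Finite.mem_toFinset] at hf hf'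
    obtain ⟨x, hx, rfl⟩ := hf
    obtain ⟨y, hy, rfl⟩ := hf'
    apply hrr
    refine norm_sub_le_of _ _ _ (hr x hx).2 (norm_sub_le_of _ _ _ h ?_)
    rw [norm_sub_rev]; exact (hr y hy).2

lemma IsReps.card_ne {F : Finset K} {R ε : ℝ} (h : IsReps F R ε) (hR : 0 ≤ R) :
    (F.card : ℂ) ≠ 0 := by
  obtain ⟨f, hf, -⟩ := h.ex 0 (by simpa using hR)
  exact Nat.cast_ne_zero.2 (Finset.card_ne_zero_of_mem hf)

/-- Translation invariance of sums over representatives. -/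
lemma IsReps.sum_shift {F : Finset K} {R ε : ℝ} (h : IsReps F R ε)
    {V : Type*} [AddCommMonoid V] (g : K → V)
    (hg : ∀ x y : K, ‖x‖ ≤ R → ‖y‖ ≤ R → ‖x - y‖ ≤ ε → g x = g y) (b : K) (hb : ‖b‖ ≤ R) :
    ∑ f ∈ F, g (f + b) = ∑ f ∈ F, g f := by
  have hex : ∀ f ∈ F, ∃ f' ∈ F, ‖f + b - f'‖ ≤ ε := fun f hf =>
    h.ex _ (norm_add_le_of _ _ (h.mem f hf) hb)
  choose! i hi1 hi2 using hex
  refine Finset.sum_bij (fun f _ => i f) (fun f hf => hi1 f hf) ?_ ?_ ?_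
  · intro f hf f' hf' he
    apply h.uniq f hf f' hf'
    have h1 := hi2 f hf
    have h2 := hi2 f' hf'
    rw [he] at h1
    rw [norm_sub_rev] at h2
    have := norm_sub_le_of _ _ _ h1 h2
    simpa using this
  · intro f hf
    have hb' : ‖f - b‖ ≤ R := by
      rw [sub_eq_add_neg]
      exact norm_add_le_of _ _ (h.mem f hf) (by simpa using hb)
    obtain ⟨f', hf', hh⟩ := h.ex _ hb'
    refine ⟨f', hf', h.uniq _ (hi1 f' hf') _ hf ?_⟩
    have h2 := hi2 f' hf'
    rw [norm_sub_rev] at h2 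
    refine norm_sub_le_of _ _ _ h2 ?_
    rw [show f' + b - f = -(f - b - f') by ring, norm_neg]
    exact hh
  · intro f hf
    exact hg _ _ (norm_add_le_of _ _ (h.mem f hf) hb) (h.mem _ (hi1 f hf)) (hi2 f hf)

/-- Orthogonality of characters. -/
lemma IsReps.orth {F : Finset K} {R ε : ℝ} (h : IsReps F R ε) (θ : AddChar K ℂ)
    (hθ : ∀ x : K, ‖x‖ ≤ ε → θ x = 1) (b : K) (hb : ‖b‖ ≤ R) (hb1 : θ b ≠ 1) :
    ∑ f ∈ F, θ f = 0 := by
  have h1 := h.sum_shift (fun x => θ x) (fun x y _ _ hxy => by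
    have : x = (x - y) + y := by ring
    show θ x = θ y
    rw [this, AddChar.map_add_eq_mul, hθ _ hxy, one_mul]) b hb
  simp only [AddChar.map_add_eq_mul] at h1
  rw [← Finset.sum_mul] at h1
  have h2 : (∑ f ∈ F, θ f) * (θ b - 1) = 0 := by rw [mul_sub, h1, mul_one, sub_self]
  rcases mul_eq_zero.1 h2 with h3 | h3
  · exact h3
  · exact absurd (sub_eq_zero.1 h3) hb1

/-- Weak smoothness. -/
def Sm {V : Type*} [AddCommGroup V] [Module ℂ V] (ρ : Rep K V) : Prop :=
  ∀ v : V, ∃ ε > 0, ∀ g : Aff K, ‖g.s‖ ≤ ε → ‖(g.t : K) - 1‖ ≤ ε → ρ g v = v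

section reps
variable {V W : Type*} [AddCommGroup V] [Module ℂ V] [AddCommGroup W] [Module ℂ W]

lemma Sm.of_smooth {ρ : Rep K V} (h : IsSmoothRep ρ) : Sm ρ := by
  intro v
  obtain ⟨U, hU, hUeq⟩ := isOpen_induced_iff.1 (h v)
  have h1 : ((1 : Kˣ), (0 : K)) ∈ U := by
    have : (1 : Aff K) ∈ {g : Aff K | ρ g v = v} := by simp
    rw [← hUeq] at this
    exact this
  have h2 := hU.mem_nhds h1
  rw [nhds_prod_eq, Filter.mem_prod_iff] at h2
  obtain ⟨A, hA, B, hB, hAB⟩ := h2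
  rw [Units.isEmbedding_val₀.nhds_eq_comap, Filter.mem_comap] at hA
  obtain ⟨A', hA', hAA⟩ := hA
  obtain ⟨e1, he1, h3⟩ := Metric.nhds_basis_closedBall.mem_iff.1 hA'
  obtain ⟨e2, he2, h4⟩ := Metric.nhds_basis_closedBall.mem_iff.1 hB
  refine ⟨min e1 e2, lt_min he1 he2, fun g hg1 hg2 => ?_⟩
  have : g ∈ {g : Aff K | ρ g v = v} := by
    rw [← hUeq]
    apply hAB
    constructor
    · apply hAA
      apply h3
      simpa [dist_eq_norm] using hg2.trans (min_le_left _ _)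
    · apply h4
      simpa [dist_eq_norm] using hg1.trans (min_le_right _ _)
  exact this

lemma Sm.sub {ρ : Rep K V} (h : Sm ρ) {U : Submodule ℂ V} (hU : GRep.Invariant ρ U) :
    Sm (GRep.sub ρ hU) := by
  intro v
  obtain ⟨ε, hε, hh⟩ := h v.1
  exact ⟨ε, hε, fun g h1 h2 => Subtype.ext (hh g h1 h2)⟩

lemma Sm.quot {ρ : Rep K V} (h : Sm ρ) {U : Submodule ℂ V} (hU : GRep.Invariant ρ U) :
    Sm (GRep.quot ρ U hU) := by
  intro v
  obtain ⟨v, rfl⟩ := Submodule.Quotient.mk_surjective _ v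
  obtain ⟨ε, hε, hh⟩ := h v
  exact ⟨ε, hε, fun g h1 h2 => by rw [GRep.quot_apply, hh g h1 h2]⟩

/-- Smoothness for `S`. -/
def SmS (ρ : Rep K V) : Prop :=
  ∀ v : V, ∃ ε > 0, ∀ b : K, ‖b‖ ≤ ε → ρ (sS b) v = v

lemma Sm.S {ρ : Rep K V} (h : Sm ρ) : SmS ρ := by
  intro v
  obtain ⟨ε, hε, hh⟩ := h v
  exact ⟨ε, hε, fun b hb => hh _ hb (by simp [hε.le])⟩

lemma SmS.quot {ρ : Rep K V} (h : SmS ρ) {U : Submodule ℂ V} (hU : GRep.Invariant ρ U) :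
    SmS (GRep.quot ρ U hU) := by
  intro v
  obtain ⟨v, rfl⟩ := Submodule.Quotient.mk_surjective _ v
  obtain ⟨ε, hε, hh⟩ := h v
  exact ⟨ε, hε, fun b h1 => by rw [GRep.quot_apply, hh b h1]⟩

lemma SmS.sub {ρ : Rep K V} (h : SmS ρ) {U : Submodule ℂ V} (hU : GRep.Invariant ρ U) :
    SmS (GRep.sub ρ hU) := by
  intro v
  obtain ⟨ε, hε, hh⟩ := h v.1
  exact ⟨ε, hε, fun b h1 => Subtype.ext (hh b h1)⟩

/-- Twisted coinvariant kernel for the ball of radius `R`. -/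
def tk (ρ : Rep K V) (θ : AddChar K ℂ) (R : ℝ) : Submodule ℂ V :=
  Submodule.span ℂ {w : V | ∃ (b : K) (v : V), ‖b‖ ≤ R ∧ w = ρ (sS b) v - θ b • v}

lemma tk_mono (ρ : Rep K V) (θ : AddChar K ℂ) {R R' : ℝ} (h : R ≤ R') : tk ρ θ R ≤ tk ρ θ R' := by
  apply Submodule.span_mono
  rintro w ⟨b, v, hb, rfl⟩
  exact ⟨b, v, hb.trans h, rfl⟩

lemma tk_le (ρ : Rep K V) (θ : AddChar K ℂ) (R : ℝ) : tk ρ θ R ≤ sTwistKer ρ θ := by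
  apply Submodule.span_mono
  rintro w ⟨b, v, hb, rfl⟩
  exact ⟨b, v, rfl⟩

lemma exists_tk (ρ : Rep K V) (θ : AddChar K ℂ) {v : V} (hv : v ∈ sTwistKer ρ θ) :
    ∃ R, v ∈ tk ρ θ R := by
  induction hv using Submodule.span_induction with
  | mem x h =>
    obtain ⟨b, v, rfl⟩ := h
    exact ⟨‖b‖, Submodule.subset_span ⟨b, v, le_rfl, rfl⟩⟩
  | zero => exact ⟨0, Submodule.zero_mem _⟩
  | add x y _ _ hx hy =>
    obtain ⟨R, hR⟩ := hx
    obtain ⟨R', hR'⟩ := hy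
    exact ⟨max R R', Submodule.add_mem _ (tk_mono _ _ (le_max_left _ _) hR)
      (tk_mono _ _ (le_max_right _ _) hR')⟩
  | smul a x _ hx =>
    obtain ⟨R, hR⟩ := hx
    exact ⟨R, Submodule.smul_mem _ _ hR⟩

/-- Twisted averaging operator (unnormalized). -/
def av (ρ : Rep K V) (θ : AddChar K ℂ) (F : Finset K) (v : V) : V :=
  ∑ b ∈ F, θ (-b) • ρ (sS b) v

lemma theta_neg_mul (θ : AddChar K ℂ) (b : K) : θ (-b) * θ b = 1 := by
  rw [← AddChar.map_add_eq_mul]; simp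

lemma mem_tk_of_av (ρ : Rep K V) (θ : AddChar K ℂ) {F : Finset K} {R ε : ℝ} (h : IsReps F R ε)
    (hR : 0 ≤ R) {v : V} (hv : av ρ θ F v = 0) : v ∈ tk ρ θ R := by
  have h1 : ∑ b ∈ F, θ (-b) • (ρ (sS b) v - θ b • v) ∈ tk ρ θ R :=
    Submodule.sum_mem _ fun b hb => Submodule.smul_mem _ _
      (Submodule.subset_span ⟨b, v, h.mem b hb, rfl⟩)
  simp only [smul_sub, smul_smul, theta_neg_mul, one_smul, Finset.sum_sub_distrib] at h1
  have h2 : ∑ b ∈ F, θ (-b) • ρ (sS b) v = 0 := hv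
  rw [h2, zero_sub, Submodule.neg_mem_iff, Finset.sum_const, ← Nat.cast_smul_eq_nsmul ℂ] at h1
  exact (Submodule.smul_mem_iff _ (h.card_ne hR)).1 h1

lemma sS_add_apply (ρ : Rep K V) (a b : K) (v : V) : ρ (sS (a + b)) v = ρ (sS a) (ρ (sS b) v) := by
  rw [← Module.End.mul_apply, ← map_mul]
  congr 2
  ext <;> simp

lemma AddChar_ball {θ : AddChar K ℂ} (hθ : IsLocallyConstant (⇑θ)) :
    ∃ c > 0, ∀ x : K, ‖x‖ ≤ c → θ x = 1 := by
  have h := (hθ.isOpen_fiber 1).mem_nhds (x := (0 : K)) (AddChar.map_zero_eq_one θ)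
  obtain ⟨c, hc, h3⟩ := Metric.nhds_basis_closedBall.mem_iff.1 h
  refine ⟨c, hc, fun x hx => ?_⟩
  have := h3 (show x ∈ Metric.closedBall (0 : K) c by simpa using hx)
  simpa using this

lemma inv_fun (ρ : Rep K V) (θ : AddChar K ℂ) {ε : ℝ} (hθ : ∀ x : K, ‖x‖ ≤ ε → θ x = 1)
    {v : V} (hv : ∀ x : K, ‖x‖ ≤ ε → ρ (sS x) v = v) (x y : K) (hxy : ‖x - y‖ ≤ ε) :
    θ (-x) • ρ (sS x) v = θ (-y) • ρ (sS y) v := by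
  have e1 : x = y + (x - y) := by ring
  have e2 : -x = (y - x) + -y := by ring
  rw [e2, AddChar.map_add_eq_mul, hθ _ (by rwa [norm_sub_rev]), one_mul]
  congr 1
  rw [e1, sS_add_apply, hv _ hxy]

lemma av_shift (ρ : Rep K V) (θ : AddChar K ℂ) {F : Finset K} {R ε : ℝ} (h : IsReps F R ε)
    (hθ : ∀ x : K, ‖x‖ ≤ ε → θ x = 1)
    {v : V} (hv : ∀ x : K, ‖x‖ ≤ ε → ρ (sS x) v = v) (b : K) (hb : ‖b‖ ≤ R) :
    ρ (sS b) (av ρ θ F v) = θ b • av ρ θ F v := by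
  have h1 := h.sum_shift (fun x => θ (-x) • ρ (sS x) v)
    (fun x y _ _ hxy => inv_fun ρ θ hθ hv x y hxy) b hb
  have h2 : av ρ θ F v = ∑ f ∈ F, θ (-(f + b)) • ρ (sS (f + b)) v := h1.symm
  conv_rhs => rw [h2]
  unfold av
  rw [map_sum, Finset.smul_sum]
  refine Finset.sum_congr rfl fun f _ => ?_
  rw [map_smul, smul_smul, ← AddChar.map_add_eq_mul, add_comm f b, sS_add_apply]
  congr 2
  ring

lemma av_eq_zero (ρ : Rep K V) (hρ : SmS ρ) (θ : AddChar K ℂ) (hθ : IsLocallyConstant (⇑θ))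
    {R : ℝ} {v : V} (hv : v ∈ tk ρ θ R) :
    ∃ ε₀ > 0, ∀ ε ≤ ε₀, ∀ F : Finset K, IsReps F R ε → av ρ θ F v = 0 := by
  induction hv using Submodule.span_induction with
  | mem x h =>
    obtain ⟨b, v, hb, rfl⟩ := h
    obtain ⟨c, hc, hcθ⟩ := AddChar_ball hθ
    obtain ⟨e, he, hev⟩ := hρ v
    refine ⟨min c e, lt_min hc he, fun ε hε F hF => ?_⟩
    have h1 := av_shift ρ θ hF (fun x hx => hcθ x (hx.trans (hε.trans (min_le_left _ _))))
      (fun x hx => hev x (hx.trans (hε.trans (min_le_right _ _)))) b hb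
    unfold av at h1 ⊢
    rw [map_sum, Finset.smul_sum] at h1
    simp only [map_sub, smul_sub, Finset.sum_sub_distrib]
    rw [sub_eq_zero]
    refine Eq.trans ?_ (h1.trans ?_)
    · refine Finset.sum_congr rfl fun f _ => ?_
      rw [map_smul, ← sS_add_apply, ← sS_add_apply, add_comm]
    · refine Finset.sum_congr rfl fun f _ => ?_
      rw [map_smul, smul_comm]
  | zero => exact ⟨1, one_pos, fun ε _ F _ => by simp [av]⟩
  | add x y _ _ hx hy =>
    obtain ⟨e, he, h1⟩ := hx
    obtain ⟨e', he', h2⟩ := hy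
    refine ⟨min e e', lt_min he he', fun ε hε F hF => ?_⟩
    have h1 := h1 ε (hε.trans (min_le_left _ _)) F hF
    have h2 := h2 ε (hε.trans (min_le_right _ _)) F hF
    unfold av at h1 h2 ⊢
    simp only [map_add, smul_add, Finset.sum_add_distrib, h1, h2, add_zero]
  | smul a x _ hx =>
    obtain ⟨e, he, h1⟩ := hx
    refine ⟨e, he, fun ε hε F hF => ?_⟩
    have h1 := h1 ε hε F hF
    unfold av at h1 ⊢
    simp only [map_smul, smul_comm _ a, ← Finset.smul_sum, h1, smul_zero]

/-- Exactness of twisted coinvariants. -/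
lemma twist_exact (ρ : Rep K V) (σ : Rep K W) (hσ : SmS σ) (θ : AddChar K ℂ)
    (hθ : IsLocallyConstant (⇑θ)) (f : V →ₗ[ℂ] W) (hf : GRep.Equivariant ρ σ f)
    (hinj : Function.Injective f) {v : V} (hv : f v ∈ sTwistKer σ θ) : v ∈ sTwistKer ρ θ := by
  obtain ⟨R, hR⟩ := exists_tk σ θ hv
  replace hR := tk_mono σ θ (le_max_left R 0) hR
  obtain ⟨ε, hε, hh⟩ := av_eq_zero σ hσ θ hθ hR
  obtain ⟨F, hF⟩ := exists_reps (K := K) (max R 0) ε hε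
  have h1 := hh ε le_rfl F hF
  refine tk_le _ _ _ (mem_tk_of_av ρ θ hF (le_max_right _ _) (v := v) (hinj ?_))
  rw [map_zero, ← h1]
  unfold av
  simp only [map_sum, map_smul, hf _ _]

lemma sCoinvKer_eq (ρ : Rep K V) : sCoinvKer ρ = sTwistKer ρ 1 := by
  unfold sCoinvKer sTwistKer
  simp

lemma coinv_exact (ρ : Rep K V) (σ : Rep K W) (hσ : SmS σ)
    (f : V →ₗ[ℂ] W) (hf : GRep.Equivariant ρ σ f)
    (hinj : Function.Injective f) {v : V} (hv : f v ∈ sCoinvKer σ) : v ∈ sCoinvKer ρ := by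
  rw [sCoinvKer_eq] at hv ⊢
  exact twist_exact ρ σ hσ 1 (IsLocallyConstant.const 1) f hf hinj hv

lemma twist_map (ρ : Rep K V) (σ : Rep K W) (θ : AddChar K ℂ)
    (f : V →ₗ[ℂ] W) (hf : GRep.Equivariant ρ σ f) {v : V} (hv : v ∈ sTwistKer ρ θ) :
    f v ∈ sTwistKer σ θ := by
  have : sTwistKer ρ θ ≤ (sTwistKer σ θ).comap f := by
    refine Submodule.span_le.2 ?_
    rintro w ⟨b, v, rfl⟩
    simp only [SetLike.mem_coe, Submodule.mem_comap, map_sub, map_smul]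
    rw [hf]
    exact Submodule.subset_span ⟨b, f v, rfl⟩
  exact this hv

end reps
end Aux

section Aux2
open Aff
variable {K : Type*} [NontriviallyNormedField K] [IsUltrametricDist K] [ProperSpace K]
variable {V W : Type*} [AddCommGroup V] [Module ℂ V] [AddCommGroup W] [Module ℂ W]

lemma mulShift_lc {ψ : AddChar K ℂ} (hψ : IsLocallyConstant (⇑ψ)) (c : K) :
    IsLocallyConstant (⇑(AddChar.mulShift ψ c)) := by
  have : (⇑(AddChar.mulShift ψ c)) = ψ ∘ (fun x => c * x) := by
    funext x; simp [AddChar.mulShift_apply]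
  rw [this]
  exact hψ.comp_continuous (continuous_const.mul continuous_id)

lemma twist_shift (ρ : Rep K V) (ψ : AddChar K ℂ) (h : sTwistKer ρ ψ = ⊤) (u : Kˣ) :
    sTwistKer ρ (AddChar.mulShift ψ (u : K)) = ⊤ := by
  rw [eq_top_iff]
  intro v _
  have h1 : sTwistKer ρ ψ ≤ (sTwistKer ρ (AddChar.mulShift ψ (u : K))).comap (ρ (xT u⁻¹)) := by
    refine Submodule.span_le.2 ?_
    rintro w ⟨b, v, rfl⟩
    simp only [SetLike.mem_coe, Submodule.mem_comap, map_sub, map_smul]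
    have h2 : ρ (xT u⁻¹) (ρ (sS b) v) = ρ (sS ((u⁻¹ : Kˣ) * b)) (ρ (xT u⁻¹) v) := by
      rw [← Module.End.mul_apply, ← map_mul, mul_sS, map_mul, Module.End.mul_apply]; rfl
    rw [h2]
    refine Submodule.subset_span ⟨(u⁻¹ : Kˣ) * b, ρ (xT u⁻¹) v, ?_⟩
    rw [AddChar.mulShift_apply, Units.mul_inv_cancel_left]
  have h3 : ρ (xT u) v ∈ sTwistKer ρ ψ := by rw [h]; trivial
  have h4 := h1 h3
  rw [Submodule.mem_comap, ← Module.End.mul_apply, ← map_mul] at h4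
  have h5 : (xT u⁻¹ : Aff K) * xT u = 1 := by ext <;> simp
  rwa [h5, map_one] at h4

lemma tk_congr (ρ : Rep K V) (θ θ' : AddChar K ℂ) (R : ℝ) (h : ∀ b : K, ‖b‖ ≤ R → θ b = θ' b) :
    tk ρ θ R = tk ρ θ' R := by
  unfold tk
  congr 1
  ext w
  constructor
  · rintro ⟨b, v, hb, rfl⟩
    exact ⟨b, v, hb, by rw [h b hb]⟩
  · rintro ⟨b, v, hb, rfl⟩
    exact ⟨b, v, hb, by rw [h b hb]⟩

lemma compact_annulus (δ L : ℝ) : IsCompact {x : K | δ ≤ ‖x‖ ∧ ‖x‖ ≤ L} := by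
  refine IsCompact.of_isClosed_subset (isCompact_closedBall (0 : K) L) ?_ ?_
  · exact (isClosed_le continuous_const continuous_norm).inter
      (isClosed_le continuous_norm continuous_const)
  · intro x hx
    simpa using hx.2

lemma uniform_tk (ρ : Rep K V) (ψ : AddChar K ℂ) (hψ : IsLocallyConstant (⇑ψ))
    (h : sTwistKer ρ ψ = ⊤) (v : V) (δ L : ℝ) (hδ : 0 < δ) :
    ∃ R, ∀ x : K, δ ≤ ‖x‖ → ‖x‖ ≤ L → v ∈ tk ρ (AddChar.mulShift ψ x) R := by
  have key : ∃ R, ∀ x ∈ {x : K | δ ≤ ‖x‖ ∧ ‖x‖ ≤ L}, v ∈ tk ρ (AddChar.mulShift ψ x) R := by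
    refine (compact_annulus δ L).induction_on
      (p := fun s => ∃ R, ∀ x ∈ s, v ∈ tk ρ (AddChar.mulShift ψ x) R) ⟨0, by simp⟩ ?_ ?_ ?_
    · rintro s t hst ⟨R, hR⟩
      exact ⟨R, fun x hx => hR x (hst hx)⟩
    · rintro s t ⟨R, hR⟩ ⟨R', hR'⟩
      refine ⟨max R R', ?_⟩
      rintro x (hx | hx)
      · exact tk_mono _ _ (le_max_left _ _) (hR x hx)
      · exact tk_mono _ _ (le_max_right _ _) (hR' x hx)
    · rintro x ⟨hx1, hx2⟩
      have hx0 : x ≠ 0 := by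
        rintro rfl
        simp at hx1; linarith
      obtain ⟨R, hR⟩ := exists_tk ρ (AddChar.mulShift ψ x) (v := v)
        (by rw [show x = ((Units.mk0 x hx0 : Kˣ) : K) from rfl, twist_shift ρ ψ h]; trivial)
      obtain ⟨c, hc, hcψ⟩ := AddChar_ball hψ
      have hR1 : (0 : ℝ) < max R 1 := lt_max_of_lt_right one_pos
      refine ⟨Metric.ball x (c / max R 1), mem_nhdsWithin_of_mem_nhds
        (Metric.ball_mem_nhds _ (div_pos hc hR1)), max R 1, ?_⟩
      intro y hy
      rw [tk_congr ρ _ (AddChar.mulShift ψ x) (max R 1)]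
      · exact tk_mono _ _ (le_max_left _ _) hR
      · intro b hb
        rw [AddChar.mulShift_apply, AddChar.mulShift_apply,
          show y * b = (y - x) * b + x * b by ring, AddChar.map_add_eq_mul, hcψ, one_mul]
        rw [Metric.mem_ball, dist_eq_norm] at hy
        rw [norm_mul]
        calc ‖y - x‖ * ‖b‖ ≤ (c / max R 1) * max R 1 :=
              mul_le_mul hy.le hb (norm_nonneg _) (div_pos hc hR1).le
          _ = c := by field_simp
  obtain ⟨R, hR⟩ := key
  exact ⟨R, fun x h1 h2 => hR x ⟨h1, h2⟩⟩

lemma exists_ne_one {ψ : AddChar K ℂ} (hψne : ψ ≠ 1) : ∃ b : K, ψ b ≠ 1 := by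
  by_contra hcon
  push Not at hcon
  apply hψne
  ext b
  simpa using hcon b

/-- If the `ψ`-twisted coinvariants vanish, `S` acts trivially. -/
lemma trivial_of_twist (ρ : Rep K V) (hρ : SmS ρ) (ψ : AddChar K ℂ) (hψ : IsLocallyConstant (⇑ψ))
    (hψne : ψ ≠ 1) (h : sTwistKer ρ ψ = ⊤) (v : V) (b : K) : ρ (sS b) v = v := by
  obtain ⟨b0, hb0⟩ := exists_ne_one hψne
  obtain ⟨c, hc, hcψ⟩ := AddChar_ball hψ
  obtain ⟨e1, he1, hev⟩ := hρ v
  have hb0' : 0 < ‖b0‖ := by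
    rw [norm_pos_iff]; rintro rfl; simp at hb0
  set L : ℝ := ‖b0‖ / e1 with hL
  have hLpos : 0 < L := div_pos hb0' he1
  set δ : ℝ := c / (‖b‖ + 1) with hδ
  have hb1 : 0 < ‖b‖ + 1 := by positivity
  have hδpos : 0 < δ := div_pos hc hb1
  obtain ⟨R0, hR0⟩ := uniform_tk ρ ψ hψ h v δ L hδpos
  set R : ℝ := max R0 (‖b‖ + 1) with hR
  have hRpos : 0 < R := lt_max_of_lt_right hb1
  have hbR : ‖b‖ ≤ R := le_trans (by linarith) (le_max_right _ _)
  obtain ⟨Λ, hΛ⟩ := exists_reps (K := K) L (c / R) (div_pos hc hRpos)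
  have hex : ∀ x : K, ∃ ε₀ > 0, δ ≤ ‖x‖ → ‖x‖ ≤ L → ∀ ε ≤ ε₀, ∀ F : Finset K, IsReps F R ε →
      av ρ (AddChar.mulShift ψ x) F v = 0 := by
    intro x
    by_cases hx : δ ≤ ‖x‖ ∧ ‖x‖ ≤ L
    · obtain ⟨ε, hε, hh⟩ := av_eq_zero ρ hρ (AddChar.mulShift ψ x) (mulShift_lc hψ x)
        (tk_mono _ _ (le_max_left R0 (‖b‖ + 1)) (hR0 x hx.1 hx.2))
      exact ⟨ε, hε, fun _ _ => hh⟩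
    · exact ⟨1, one_pos, fun h1 h2 => absurd ⟨h1, h2⟩ hx⟩
  choose e he hee using hex
  have hmin : ∃ ε > 0, ε ≤ e1 ∧ ε ≤ c / L ∧ ∀ x ∈ Λ, ε ≤ e x := by
    have : ∀ s : Finset K, ∃ ε > 0, ∀ x ∈ s, ε ≤ e x := by
      intro s
      induction s using Finset.induction_on with
      | empty => exact ⟨1, one_pos, by simp⟩
      | insert a s _ ih =>
        obtain ⟨ε, hε, hh⟩ := ih
        refine ⟨min ε (e a), lt_min hε (he a), ?_⟩
        intro x hx
        rcases Finset.mem_insert.1 hx with rfl | hx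
        · exact min_le_right _ _
        · exact (min_le_left _ _).trans (hh x hx)
    obtain ⟨ε, hε, hh⟩ := this Λ
    exact ⟨min ε (min e1 (c / L)), lt_min hε (lt_min he1 (div_pos hc hLpos)),
      (min_le_right _ _).trans (min_le_left _ _), (min_le_right _ _).trans (min_le_right _ _),
      fun x hx => (min_le_left _ _).trans (hh x hx)⟩
  obtain ⟨ε, hε, hεe, hεL, hεx⟩ := hmin
  obtain ⟨B, hB⟩ := exists_reps (K := K) R ε hε
  have hsmall : ∀ x y : K, ‖x‖ ≤ L → ‖y‖ ≤ ε → ψ (x * y) = 1 := by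
    intro x y hx hy
    apply hcψ
    rw [norm_mul]
    calc ‖x‖ * ‖y‖ ≤ L * (c / L) :=
          mul_le_mul hx (hy.trans hεL) (norm_nonneg _) hLpos.le
      _ = c := by field_simp
  -- each term is fixed by `s_b`
  have hfix : ∀ x ∈ Λ, ρ (sS b) (av ρ (AddChar.mulShift ψ x) B v)
      = av ρ (AddChar.mulShift ψ x) B v := by
    intro x hx
    by_cases hxδ : δ ≤ ‖x‖
    · rw [hee x hxδ (hΛ.mem x hx) ε (hεx x hx) B hB, map_zero]
    · rw [av_shift ρ (AddChar.mulShift ψ x) hB ?_ (fun y hy => hev y (hy.trans hεe)) b hbR]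
      · rw [AddChar.mulShift_apply, hcψ, one_smul]
        rw [norm_mul]
        push Not at hxδ
        calc ‖x‖ * ‖b‖ ≤ δ * (‖b‖ + 1) :=
              mul_le_mul hxδ.le (by linarith) (norm_nonneg _) hδpos.le
          _ = c := by rw [hδ]; field_simp
      · intro y hy
        rw [AddChar.mulShift_apply]
        exact hsmall x y (hΛ.mem x hx) hy
  have hsumfix : ρ (sS b) (∑ x ∈ Λ, av ρ (AddChar.mulShift ψ x) B v)
      = ∑ x ∈ Λ, av ρ (AddChar.mulShift ψ x) B v := by
    rw [map_sum]
    exact Finset.sum_congr rfl hfix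
  -- Fourier inversion
  let P : K → Prop := fun y => ∀ x : K, ‖x‖ ≤ L → ψ (x * y) = 1
  have hterm : ∀ y ∈ B, (∑ x ∈ Λ, AddChar.mulShift ψ x (-y)) • ρ (sS y) v
      = (if P y then (Λ.card : ℂ) else 0) • v := by
    intro y hy
    by_cases hP : P y
    · rw [if_pos hP]
      have h1 : ∑ x ∈ Λ, AddChar.mulShift ψ x (-y) = (Λ.card : ℂ) := by
        rw [Finset.sum_congr rfl (g := fun _ => (1 : ℂ))]
        · simp
        · intro x hx
          rw [AddChar.mulShift_apply, show x * -y = (-x) * y by ring]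
          exact hP _ (by simpa using hΛ.mem x hx)
      rw [h1, hev]
      by_contra hcon
      push Not at hcon
      have hy0 : y ≠ 0 := by rintro rfl; simp at hcon; linarith
      apply hb0
      have := hP (b0 / y) (by
        rw [norm_div, hL]
        exact div_le_div_of_nonneg_left (norm_nonneg _) he1 hcon.le)
      rwa [div_mul_cancel₀ _ hy0] at this
    · rw [if_neg hP, zero_smul]
      have hP' : ∃ x : K, ‖x‖ ≤ L ∧ ψ (x * y) ≠ 1 := by
        by_contra hcon
        push Not at hcon
        exact hP hcon
      obtain ⟨x, hx, hxy⟩ := hP'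
      have h1 := hΛ.orth (AddChar.mulShift ψ (-y)) (fun z hz => by
        rw [AddChar.mulShift_apply]
        apply hcψ
        rw [norm_mul, norm_neg]
        calc ‖y‖ * ‖z‖ ≤ R * (c / R) :=
              mul_le_mul (hB.mem y hy) hz (norm_nonneg _) hRpos.le
          _ = c := by field_simp) (-x) (by simpa using hx) (by
            rw [AddChar.mulShift_apply, show -y * -x = x * y by ring]; exact hxy)
      have h2 : ∑ x ∈ Λ, AddChar.mulShift ψ x (-y) = 0 := by
        rw [← h1]
        refine Finset.sum_congr rfl fun z _ => ?_
        rw [AddChar.mulShift_apply, AddChar.mulShift_apply, mul_comm]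
      rw [h2, zero_smul]
  have hsum : ∑ x ∈ Λ, av ρ (AddChar.mulShift ψ x) B v
      = (((B.filter P).card : ℂ) * (Λ.card : ℂ)) • v := by
    unfold av
    rw [Finset.sum_comm]
    simp only [← Finset.sum_smul]
    rw [Finset.sum_congr rfl hterm, ← Finset.sum_smul]
    congr 1
    rw [← Finset.sum_filter, Finset.sum_const, nsmul_eq_mul]
  have hne : (((B.filter P).card : ℂ) * (Λ.card : ℂ)) ≠ 0 := by
    refine mul_ne_zero ?_ (hΛ.card_ne hLpos.le)
    obtain ⟨f, hf, hf0⟩ := hB.ex 0 (by simpa using hRpos.le)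
    rw [zero_sub, norm_neg] at hf0
    refine Nat.cast_ne_zero.2 (Finset.card_ne_zero_of_mem (a := f) ?_)
    rw [Finset.mem_filter]
    exact ⟨hf, fun x hx => hsmall x f hx hf0⟩
  rw [hsum, map_smul] at hsumfix
  exact smul_right_injective V hne hsumfix

end Aux2

section Aux3
open Aff
variable {K : Type*} [NontriviallyNormedField K] [IsUltrametricDist K] [ProperSpace K]
variable {V W : Type*} [AddCommGroup V] [Module ℂ V] [AddCommGroup W] [Module ℂ W]

lemma ss_bdd (f : ↥(SSx K)) : ∃ C > 0, ∀ x : Kˣ, f.1 x ≠ 0 → ‖(x : K)‖ ≤ C := by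
  have h1 : IsCompact (((↑) : Kˣ → K) '' tsupport f.1) :=
    IsCompact.image f.2.2 Units.continuous_val
  obtain ⟨C, hC, h2⟩ := h1.isBounded.exists_pos_norm_le
  exact ⟨C, hC, fun x hx => h2 _ ⟨x, subset_tsupport _ hx, rfl⟩⟩

lemma ss_zero (f : ↥(SSx K)) : ∃ η > 0, ∀ x : Kˣ, ‖(x : K) - 0‖ < η → f.1 x = 0 := by
  have h1 : IsCompact (((↑) : Kˣ → K) '' tsupport f.1) :=
    IsCompact.image f.2.2 Units.continuous_val
  have h2 : (0 : K) ∈ (((↑) : Kˣ → K) '' tsupport f.1)ᶜ := by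
    rintro ⟨x, _, hx⟩
    exact x.ne_zero hx
  obtain ⟨η, hη, h3⟩ := Metric.isOpen_iff.1 h1.isClosed.isOpen_compl 0 h2
  refine ⟨η, hη, fun x hx => ?_⟩
  by_contra hne
  exact h3 (show (x : K) ∈ Metric.ball 0 η by simpa using hx) ⟨x, subset_tsupport _ hne, rfl⟩

lemma ss_one (f : ↥(SSx K)) (hf : f.1 1 = 0) :
    ∃ η > 0, ∀ x : Kˣ, ‖(x : K) - 1‖ < η → f.1 x = 0 := by
  have h := (f.2.1.isOpen_fiber 0).mem_nhds (x := (1 : Kˣ)) hf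
  rw [Units.isEmbedding_val₀.nhds_eq_comap, Filter.mem_comap] at h
  obtain ⟨A', hA', hAA⟩ := h
  obtain ⟨e1, he1, h3⟩ := Metric.nhds_basis_ball.mem_iff.1 hA'
  refine ⟨e1, he1, fun x hx => ?_⟩
  exact hAA (h3 (by simpa [dist_eq_norm] using hx))

lemma SRep_S_apply (ψ : AddChar K ℂ) (hψlc : IsLocallyConstant (⇑ψ)) (b : K) (f : ↥(SSx K))
    (x : Kˣ) : (SRep ψ hψlc (sS b) f).1 x = ψ (b * x) * f.1 x := by
  show ψ (b * (x : K)) * f.1 (x * 1) = _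
  rw [mul_one]

lemma SRep_smS (ψ : AddChar K ℂ) (hψlc : IsLocallyConstant (⇑ψ)) : SmS (SRep ψ hψlc) := by
  intro f
  obtain ⟨C, hC, hf⟩ := ss_bdd f
  obtain ⟨c, hc, hcψ⟩ := AddChar_ball hψlc
  refine ⟨c / C, div_pos hc hC, fun b hb => ?_⟩
  apply Subtype.ext
  funext x
  rw [SRep_S_apply]
  by_cases hx : f.1 x = 0
  · rw [hx, mul_zero]
  · rw [hcψ, one_mul]
    rw [norm_mul]
    calc ‖b‖ * ‖(x : K)‖ ≤ (c / C) * C :=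
          mul_le_mul hb (hf x hx) (norm_nonneg _) (div_pos hc hC).le
      _ = c := by field_simp

lemma ss_twist (ψ : AddChar K ℂ) (hψlc : IsLocallyConstant (⇑ψ)) (hψne : ψ ≠ 1) (f : ↥(SSx K))
    (x0 : K) (h : ∃ η > 0, ∀ x : Kˣ, ‖(x : K) - x0‖ < η → f.1 x = 0) :
    f ∈ sTwistKer (SRep ψ hψlc) (AddChar.mulShift ψ x0) := by
  obtain ⟨η, hη, hfη⟩ := h
  obtain ⟨b0, hb0⟩ := exists_ne_one hψne
  obtain ⟨c, hc, hcψ⟩ := AddChar_ball hψlc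
  obtain ⟨C, hC, hf⟩ := ss_bdd f
  set D : ℝ := max C ‖x0‖ with hD
  have hDpos : 0 < D := lt_max_of_lt_left hC
  obtain ⟨F, hF⟩ := exists_reps (K := K) (‖b0‖ / η) (c / D) (div_pos hc hDpos)
  refine tk_le _ _ _ (mem_tk_of_av _ _ hF (by positivity) ?_)
  apply Subtype.ext
  funext x
  have h1 : (av (SRep ψ hψlc) (AddChar.mulShift ψ x0) F f).1 x
      = (∑ b ∈ F, AddChar.mulShift ψ ((x : K) - x0) b) * f.1 x := by
    unfold av
    rw [AddSubmonoidClass.coe_finset_sum, Finset.sum_apply, Finset.sum_mul]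
    refine Finset.sum_congr rfl fun b _ => ?_
    show AddChar.mulShift ψ x0 (-b) * (SRep ψ hψlc (sS b) f).1 x = _
    rw [SRep_S_apply, ← mul_assoc]
    simp only [AddChar.mulShift_apply]
    rw [← AddChar.map_add_eq_mul]
    congr 2
    ring
  rw [h1]
  show _ = (0 : ℂ)
  by_cases hx : f.1 x = 0
  · rw [hx, mul_zero]
  have hxη : η ≤ ‖(x : K) - x0‖ := by
    by_contra hcon
    push Not at hcon
    exact hx (hfη x hcon)
  have hx0 : (x : K) - x0 ≠ 0 := by
    intro h0; rw [h0, norm_zero] at hxη; linarith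
  rw [hF.orth (AddChar.mulShift ψ ((x : K) - x0)) ?_ (b0 / ((x : K) - x0)) ?_ ?_, zero_mul]
  · intro y hy
    rw [AddChar.mulShift_apply]
    apply hcψ
    rw [norm_mul]
    have h2 : ‖(x : K) - x0‖ ≤ D := by
      rw [sub_eq_add_neg]
      refine norm_add_le_of _ _ ((hf x hx).trans (le_max_left _ _)) ?_
      rw [norm_neg]; exact le_max_right _ _
    calc ‖(x : K) - x0‖ * ‖y‖ ≤ D * (c / D) :=
          mul_le_mul h2 hy (norm_nonneg _) hDpos.le
      _ = c := by field_simp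
  · rw [norm_div]
    exact div_le_div_of_nonneg_left (norm_nonneg _) hη hxη
  · rw [AddChar.mulShift_apply, mul_div_cancel₀ _ hx0]
    exact hb0

lemma ss_mem_twist (ψ : AddChar K ℂ) (hψlc : IsLocallyConstant (⇑ψ)) (hψne : ψ ≠ 1)
    (f : ↥(SSx K)) : f ∈ sTwistKer (SRep ψ hψlc) ψ ↔ f.1 1 = 0 := by
  constructor
  · intro hf
    induction hf using Submodule.span_induction with
    | mem x h =>
      obtain ⟨b, v, rfl⟩ := h
      show (SRep ψ hψlc (sS b) v).1 1 - ψ b * v.1 1 = 0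
      rw [SRep_S_apply]
      simp
    | zero => rfl
    | add x y _ _ hx hy =>
      show x.1 1 + y.1 1 = 0
      rw [hx, hy, add_zero]
    | smul a x _ hx =>
      show a * x.1 1 = 0
      rw [hx, mul_zero]
  · intro hf
    have := ss_twist ψ hψlc hψne f 1 (ss_one f hf)
    rwa [AddChar.mulShift_one] at this

lemma ss_coinv (ψ : AddChar K ℂ) (hψlc : IsLocallyConstant (⇑ψ)) (hψne : ψ ≠ 1)
    (f : ↥(SSx K)) : f ∈ sCoinvKer (SRep ψ hψlc) := by
  rw [sCoinvKer_eq]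
  have := ss_twist ψ hψlc hψne f 0 (ss_zero f)
  rwa [AddChar.mulShift_zero] at this

/-- If `J(V/U) = 0` then `V(S) ⊆ U`. -/
lemma coinv_le_of_sup (ρ : Rep K V) (hρ : SmS ρ) (ψ : AddChar K ℂ) (hψlc : IsLocallyConstant (⇑ψ))
    (hψne : ψ ≠ 1) (U : Submodule ℂ V) (hU : GRep.Invariant ρ U)
    (h : ∀ v : V, ∃ u ∈ U, v - u ∈ sTwistKer ρ ψ) : sCoinvKer ρ ≤ U := by
  have h1 : sTwistKer (GRep.quot ρ U hU) ψ = ⊤ := by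
    rw [eq_top_iff]
    intro x _
    obtain ⟨v, rfl⟩ := Submodule.Quotient.mk_surjective _ x
    obtain ⟨u, hu, hvu⟩ := h v
    have h2 := twist_map ρ (GRep.quot ρ U hU) ψ U.mkQ (GRep.mkQ_equivariant ρ U hU) hvu
    rw [map_sub] at h2
    have h3 : U.mkQ u = 0 := by simpa using hu
    rw [h3, sub_zero] at h2
    exact h2
  refine Submodule.span_le.2 ?_
  rintro w ⟨b, v, rfl⟩
  have h2 := trivial_of_twist _ (hρ.quot hU) ψ hψlc hψne h1 (Submodule.Quotient.mk v) b
  rw [GRep.quot_apply] at h2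
  exact (Submodule.Quotient.eq U).1 h2

/-- irreducibility of `𝕊`. -/
lemma ss_irred (ψ : AddChar K ℂ) (hψlc : IsLocallyConstant (⇑ψ)) (hψne : ψ ≠ 1)
    (P : Submodule ℂ ↥(SSx K)) (hP : GRep.Invariant (SRep ψ hψlc) P)
    (f : ↥(SSx K)) (hf : f ∈ P) (hf0 : f ≠ 0) : P = ⊤ := by
  have hx : ∃ x, f.1 x ≠ 0 := by
    by_contra hcon
    push Not at hcon
    exact hf0 (Subtype.ext (funext hcon))
  obtain ⟨x, hx⟩ := hx
  have hg : SRep ψ hψlc (xT x) f ∈ P := hP _ _ hf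
  set g := SRep ψ hψlc (xT x) f with hgdef
  have hg1 : g.1 1 ≠ 0 := by
    have : g.1 1 = ψ (0 * ((1 : Kˣ) : K)) * f.1 (1 * x) := rfl
    rw [this]
    simpa using hx
  have h1 := coinv_le_of_sup (SRep ψ hψlc) (SRep_smS ψ hψlc) ψ hψlc hψne P hP (fun v => by
    refine ⟨(v.1 1 / g.1 1) • g, P.smul_mem _ hg, ?_⟩
    rw [ss_mem_twist ψ hψlc hψne]
    show v.1 1 - (v.1 1 / g.1 1) * g.1 1 = 0
    field_simp
    simp)
  rw [eq_top_iff]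
  exact fun v _ => h1 (ss_coinv ψ hψlc hψne v)

lemma units_annulus_compact (δ L : ℝ) (hδ : 0 < δ) :
    IsCompact {x : Kˣ | δ ≤ ‖(x : K)‖ ∧ ‖(x : K)‖ ≤ L} := by
  rw [Units.isEmbedding_val₀.isCompact_iff]
  convert compact_annulus (K := K) δ L using 1
  ext y
  constructor
  · rintro ⟨x, hx, rfl⟩; exact hx
  · intro hy
    have hy0 : y ≠ 0 := by
      rintro rfl
      have := hy.1
      simp at this; linarith
    exact ⟨Units.mk0 y hy0, hy, rfl⟩

/-- an irreducible smooth representation with nonzero `ψ`-coinvariants is `𝕊`. -/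
lemma iso_of_irred (ψ : AddChar K ℂ) (hψlc : IsLocallyConstant (⇑ψ)) (hψne : ψ ≠ 1)
    (σ : Rep K V) (hσ : Sm σ) 
    (hirr : ∀ U : Submodule ℂ V, GRep.Invariant σ U → U = ⊥ ∨ U = ⊤)
    (v0 : V) (hv0 : v0 ∉ sTwistKer σ ψ) : GRep.Iso σ (SRep ψ hψlc) := by
  obtain ⟨l, hl0, hl⟩ := Submodule.exists_le_ker_of_notMem hv0
  have hlS : ∀ (b : K) (v : V), l (σ (sS b) v) = ψ b * l v := by
    intro b v
    have := hl (Submodule.subset_span ⟨b, v, rfl⟩)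
    rw [LinearMap.mem_ker, map_sub, map_smul, sub_eq_zero] at this
    exact this
  obtain ⟨b0, hb0⟩ := exists_ne_one hψne
  obtain ⟨c, hc, hcψ⟩ := AddChar_ball hψlc
  have hb0' : 0 < ‖b0‖ := by
    rw [norm_pos_iff]; rintro rfl; simp at hb0
  let Φ : V →ₗ[ℂ] (Kˣ → ℂ) := LinearMap.pi fun x => l.comp (σ (xT x))
  have hΦ : ∀ v x, Φ v x = l (σ (xT x) v) := fun v x => rfl
  have heq : GRep.Equivariant σ (repCx K ψ) Φ := by
    intro g v
    funext x
    rw [repCx_apply, hΦ, hΦ, ← Module.End.mul_apply, ← map_mul]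
    have : xT x * g = sS (g.s * (x : K)) * xT (x * g.t) := by
      ext <;> simp [mul_comm]
    rw [this, map_mul, Module.End.mul_apply, hlS]
  have hinj : LinearMap.ker Φ = ⊥ := by
    rcases hirr _ (GRep.ker_invariant σ (repCx K ψ) Φ heq) with h | h
    · exact h
    · exfalso
      have h1 : v0 ∈ LinearMap.ker Φ := by rw [h]; trivial
      have h2 := congrFun (LinearMap.mem_ker.1 h1) 1
      rw [hΦ] at h2
      have : (xT 1 : Aff K) = 1 := rfl
      rw [this, map_one] at h2
      exact hl0 h2
  have hlc : ∀ v, IsLocallyConstant (Φ v) := by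
    intro v
    rw [IsLocallyConstant.iff_eventually_eq]
    intro x
    obtain ⟨ε, hε, hh⟩ := hσ v
    have h1 : Filter.Tendsto (fun y : Kˣ => ((x⁻¹ * y : Kˣ) : K)) (nhds x) (nhds 1) := by
      have : Continuous (fun y : Kˣ => ((x⁻¹ * y : Kˣ) : K)) :=
        Units.continuous_val.comp (continuous_const.mul continuous_id)
      have h2 := this.tendsto x
      simpa using h2
    have h2 := h1 (Metric.closedBall_mem_nhds (1 : K) hε)
    filter_upwards [h2] with y hy
    have hy' : ‖((x⁻¹ * y : Kˣ) : K) - 1‖ ≤ ε := by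
      simpa [dist_eq_norm] using hy
    rw [hΦ, hΦ, show (xT y : Aff K) = xT x * xT (x⁻¹ * y) by ext <;> simp, map_mul,
      Module.End.mul_apply, hh _ (by simp [hε.le]) hy']
  have hbd : ∀ v, ∃ C, ∀ x, Φ v x ≠ 0 → ‖(x : K)‖ ≤ C := by
    intro v
    obtain ⟨ε, hε, hh⟩ := hσ.S v
    refine ⟨‖b0‖ / ε, fun x hx => ?_⟩
    by_contra hcon
    push Not at hcon
    have hxn : 0 < ‖(x : K)‖ := by simp
    have h1 : ‖b0 / (x : K)‖ ≤ ε := by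
      rw [norm_div]
      rw [div_lt_iff₀ hε] at hcon
      rw [div_le_iff₀ hxn]
      linarith
    have h2 := congrFun (heq (sS (b0 / (x : K))) v) x
    rw [hh _ h1, repCx_apply] at h2
    simp only [sS_s, sS_t, mul_one] at h2
    rw [div_mul_cancel₀ _ x.ne_zero] at h2
    have h3 : (ψ b0 - 1) * Φ v x = 0 := by rw [sub_mul, ← h2, one_mul, sub_self]
    rcases mul_eq_zero.1 h3 with h4 | h4
    · exact hb0 (sub_eq_zero.1 h4)
    · exact hx h4
  -- image in SSx
  have hcomap_inv : GRep.Invariant σ ((SSx K).comap Φ) := by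
    intro g v hv
    rw [Submodule.mem_comap] at hv ⊢
    rw [heq]
    exact SSx_invariant ψ hψlc g _ hv
  have hv1 : Φ (σ (sS b0) v0 - v0) ∈ SSx K := by
    refine ⟨hlc _, ?_⟩
    obtain ⟨C, hC⟩ := hbd v0
    refine HasCompactSupport.intro' (K := {x : Kˣ | c / ‖b0‖ ≤ ‖(x : K)‖ ∧ ‖(x : K)‖ ≤ C})
      (units_annulus_compact _ _ (div_pos hc hb0')) (units_annulus_compact _ _ (div_pos hc hb0')).isClosed ?_
    intro x hx
    rw [map_sub, heq]
    show ψ (b0 * (x : K)) * Φ v0 (x * 1) - Φ v0 x = 0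
    rw [mul_one]
    by_cases h0 : Φ v0 x = 0
    · rw [h0]; simp
    · have h1 : ‖(x : K)‖ < c / ‖b0‖ := by
        by_contra hcon
        push Not at hcon
        exact hx ⟨hcon, hC x h0⟩
      rw [hcψ, one_mul, sub_self]
      rw [norm_mul]
      rw [lt_div_iff₀ hb0'] at h1
      linarith
  have hv1' : Φ (σ (sS b0) v0 - v0) ≠ 0 := by
    intro h0
    have h1 := congrFun h0 1
    rw [map_sub, heq] at h1
    have h2 : ψ (b0 * ((1 : Kˣ) : K)) * Φ v0 (1 * 1) - Φ v0 1 = 0 := h1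
    rw [mul_one] at h2
    have h3 : Φ v0 1 = l v0 := by
      rw [hΦ]
      have : (xT 1 : Aff K) = 1 := rfl
      rw [this, map_one]; rfl
    rw [h3, Units.val_one, mul_one] at h2
    have h4 : (ψ b0 - 1) * l v0 = 0 := by rw [sub_mul, one_mul]; exact h2
    rcases mul_eq_zero.1 h4 with h5 | h5
    · exact hb0 (sub_eq_zero.1 h5)
    · exact hl0 h5
  have htop : (SSx K).comap Φ = ⊤ := by
    rcases hirr _ hcomap_inv with h | h
    · exfalso
      have h1 : σ (sS b0) v0 - v0 ∈ (SSx K).comap Φ := hv1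
      rw [h, Submodule.mem_bot] at h1
      apply hv1'
      rw [h1, map_zero]
    · exact h
  have hmem : ∀ v, Φ v ∈ SSx K := fun v => by
    have : v ∈ (SSx K).comap Φ := by rw [htop]; trivial
    exact this
  let Ψ : V →ₗ[ℂ] ↥(SSx K) := Φ.codRestrict (SSx K) hmem
  have hΨeq : GRep.Equivariant σ (SRep ψ hψlc) Ψ := fun g v => Subtype.ext (heq g v)
  have hΨinj : Function.Injective Ψ := by
    intro a b hab
    exact LinearMap.ker_eq_bot.1 hinj (congrArg Subtype.val hab)
  have hΨr : LinearMap.range Ψ = ⊤ := by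
    refine ss_irred ψ hψlc hψne _ (GRep.range_invariant σ (SRep ψ hψlc) Ψ hΨeq)
      (Ψ (σ (sS b0) v0 - v0)) ⟨_, rfl⟩ ?_
    intro h0
    exact hv1' (congrArg Subtype.val h0)
  exact ⟨LinearEquiv.ofBijective Ψ ⟨hΨinj, LinearMap.range_eq_top.1 hΨr⟩, hΨeq⟩

end Aux3

section Aux4
open Aff
variable {K : Type*} [NontriviallyNormedField K] [IsUltrametricDist K] [ProperSpace K]
variable {V W : Type*} [AddCommGroup V] [Module ℂ V] [AddCommGroup W] [Module ℂ W]

lemma quot_lift (ρ : Rep K V) (U : Submodule ℂ V) (hU : GRep.Invariant ρ U) (θ : AddChar K ℂ)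
    (v : V) (h : (Submodule.Quotient.mk v : V ⧸ U) ∈ sTwistKer (GRep.quot ρ U hU) θ) :
    ∃ u ∈ U, v - u ∈ sTwistKer ρ θ := by
  have h1 : sTwistKer (GRep.quot ρ U hU) θ ≤ (sTwistKer ρ θ).map U.mkQ := by
    refine Submodule.span_le.2 ?_
    rintro w ⟨b, x, rfl⟩
    obtain ⟨x, rfl⟩ := Submodule.Quotient.mk_surjective U x
    exact ⟨ρ (sS b) x - θ b • x, Submodule.subset_span ⟨b, x, rfl⟩, rfl⟩
  obtain ⟨d, hd, hdv⟩ := h1 h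
  refine ⟨v - d, ?_, by simpa using hd⟩
  exact (Submodule.Quotient.eq U).1 hdv.symm

lemma sub_equivariant (ρ : Rep K V) {U : Submodule ℂ V} (hU : GRep.Invariant ρ U) :
    GRep.Equivariant (GRep.sub ρ hU) ρ U.subtype := fun _ _ => rfl

lemma subquot_lift (ρ : Rep K V) {A B : Submodule ℂ V} (hA : GRep.Invariant ρ A)
    (hB : GRep.Invariant ρ B) (θ : AddChar K ℂ) (v : ↥B)
    (h : (Submodule.Quotient.mk v : ↥B ⧸ A.comap B.subtype) ∈
      sTwistKer (GRep.subquot ρ hA hB) θ) :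
    ∃ a ∈ A, (v : V) - a ∈ sTwistKer ρ θ := by
  obtain ⟨u, hu, h1⟩ := quot_lift (GRep.sub ρ hB) _ _ θ v h
  exact ⟨u.1, hu, twist_map (GRep.sub ρ hB) ρ θ B.subtype (sub_equivariant ρ hB) h1⟩

lemma subquot_irred (ρ : Rep K V) {A B : Submodule ℂ V} (hA : GRep.Invariant ρ A)
    (hB : GRep.Invariant ρ B) (hAB : A ≤ B)
    (hmax : ∀ C : Submodule ℂ V, GRep.Invariant ρ C → A ≤ C → C ≤ B → C = A ∨ C = B)
    (U : Submodule ℂ (↥B ⧸ A.comap B.subtype))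
    (hU : GRep.Invariant (GRep.subquot ρ hA hB) U) : U = ⊥ ∨ U = ⊤ := by
  have hmem : ∀ v : ↥B, v.1 ∈ (U.comap (A.comap B.subtype).mkQ).map B.subtype ↔
      (Submodule.Quotient.mk v : ↥B ⧸ A.comap B.subtype) ∈ U := by
    intro v
    constructor
    · rintro ⟨w, hw, hwv⟩
      have : w = v := Subtype.ext hwv
      subst this
      exact hw
    · intro h
      exact ⟨v, h, rfl⟩
  have h1 := hmax ((U.comap (A.comap B.subtype).mkQ).map B.subtype) (by
    rintro g v ⟨w, hw, rfl⟩
    exact ⟨GRep.sub ρ hB g w, hU g _ hw, rfl⟩) (by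
    intro a ha
    refine (hmem ⟨a, hAB ha⟩).2 ?_
    have : (Submodule.Quotient.mk (⟨a, hAB ha⟩ : ↥B) : ↥B ⧸ A.comap B.subtype) = 0 :=
      (Submodule.Quotient.mk_eq_zero _).2 ha
    rw [this]
    exact U.zero_mem) (by
    rintro v ⟨w, hw, rfl⟩
    exact w.2)
  rcases h1 with h1 | h1
  · left
    rw [eq_bot_iff]
    intro x hx
    obtain ⟨v, rfl⟩ := Submodule.Quotient.mk_surjective _ x
    have h2 := (hmem v).2 hx
    rw [h1] at h2
    exact (Submodule.Quotient.mk_eq_zero _).2 h2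
  · right
    rw [eq_top_iff]
    intro x _
    obtain ⟨v, rfl⟩ := Submodule.Quotient.mk_surjective _ x
    refine (hmem v).1 ?_
    rw [h1]
    exact v.2

lemma deg_step (ψ : AddChar K ℂ) (hψlc : IsLocallyConstant (⇑ψ)) (hψne : ψ ≠ 1)
    (ρ : Rep K V) (hρ : Sm ρ) {A B : Submodule ℂ V} (hA : GRep.Invariant ρ A)
    (hB : GRep.Invariant ρ B) (hlt : A < B) (hAD : A ≤ sTwistKer ρ ψ)
    (hiso : GRep.Iso (GRep.subquot ρ hA hB) (SRep ψ hψlc)) :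
    ∃ v0, v0 ∉ sTwistKer ρ ψ ∧ ∀ v ∈ B, ∃ a : ℂ, v - a • v0 ∈ sTwistKer ρ ψ := by
  obtain ⟨e, he⟩ := hiso
  obtain ⟨w, hwB, hwA⟩ := SetLike.exists_of_lt hlt
  set w' : ↥B ⧸ A.comap B.subtype := Submodule.Quotient.mk ⟨w, hwB⟩ with hw'
  have hw0 : e w' ≠ 0 := by
    intro h
    have h2 : w' = 0 := e.map_eq_zero_iff.1 h
    exact hwA ((Submodule.Quotient.mk_eq_zero (A.comap B.subtype) (x := ⟨w, hwB⟩)).1 h2)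
  have hx : ∃ x, (e w').1 x ≠ 0 := by
    by_contra hcon
    push Not at hcon
    exact hw0 (Subtype.ext (funext hcon))
  obtain ⟨x, hx⟩ := hx
  set g := SRep ψ hψlc (xT x) (e w') with hgdef
  have hg1 : g.1 1 ≠ 0 := by
    have : g.1 1 = ψ (0 * ((1 : Kˣ) : K)) * (e w').1 (1 * x) := rfl
    rw [this]
    simpa using hx
  obtain ⟨v0, hv0⟩ := Submodule.Quotient.mk_surjective _ (e.symm g)
  have hes : GRep.Equivariant (SRep ψ hψlc) (GRep.subquot ρ hA hB)
      e.symm.toLinearMap := by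
    intro g f
    apply e.injective
    show e (e.symm _) = _
    rw [he]
    simp
  refine ⟨v0.1, fun h => ?_, fun b hb => ?_⟩
  · have h1 : v0 ∈ sTwistKer (GRep.sub ρ hB) ψ :=
      twist_exact _ ρ hρ.S ψ hψlc B.subtype (sub_equivariant ρ _) Subtype.val_injective h
    have h2 := twist_map _ (GRep.subquot ρ hA hB) ψ
      (A.comap B.subtype).mkQ (GRep.mkQ_equivariant _ _ _) h1
    have h3 := twist_map _ (SRep ψ hψlc) ψ e.toLinearMap he h2
    have h4 : e.toLinearMap ((A.comap B.subtype).mkQ v0) = g := by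
      show e (Submodule.Quotient.mk v0) = g
      rw [hv0]; simp
    rw [h4, ss_mem_twist ψ hψlc hψne] at h3
    exact hg1 h3
  · set q : ↥B ⧸ A.comap B.subtype := Submodule.Quotient.mk ⟨b, hb⟩ with hq
    set a := (e q).1 1 / g.1 1 with ha
    have h1 : e q - a • g ∈ sTwistKer (SRep ψ hψlc) ψ := by
      rw [ss_mem_twist ψ hψlc hψne]
      show (e q).1 1 - (e q).1 1 / g.1 1 * g.1 1 = 0
      field_simp
      simp
    have h2 := twist_map _ _ ψ e.symm.toLinearMap hes h1
    have h3 : e.symm.toLinearMap (e q - a • g) = Submodule.Quotient.mk (⟨b, hb⟩ - a • v0) := by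
      show e.symm (e q - a • g) = _
      rw [map_sub, map_smul, ← hv0]
      simp [hq]
    rw [h3] at h2
    obtain ⟨u, hu, h4⟩ := subquot_lift ρ _ _ ψ _ h2
    refine ⟨a, ?_⟩
    have h5 := (sTwistKer ρ ψ).add_mem h4 (hAD hu)
    convert h5 using 1
    show b - a • v0.1 = (b - a • v0.1 - u) + u
    abel

lemma deg_one (ψ : AddChar K ℂ) (hψlc : IsLocallyConstant (⇑ψ)) (hψne : ψ ≠ 1)
    (ρ : Rep K V) (hρ : Sm ρ) (c : CompSeries ρ) (hdeg : c.deg (SRep ψ hψlc) = 1) :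
    ∃ v0, v0 ∉ sTwistKer ρ ψ ∧ ∀ v, ∃ a : ℂ, v - a • v0 ∈ sTwistKer ρ ψ := by
  obtain ⟨i0, hi0⟩ := Finset.card_eq_one.1 hdeg
  have hiso : ∀ i : Fin c.n, GRep.Iso (GRep.subquot ρ (c.inv i.1) (c.inv (i.1 + 1)))
      (SRep ψ hψlc) ↔ i = i0 := by
    intro i
    have := Finset.ext_iff.1 hi0 i
    simpa using this
  have hstep : ∀ i, i < c.n → i ≠ i0.1 → ∀ v ∈ c.W (i+1), ∃ a ∈ c.W i, v - a ∈ sTwistKer ρ ψ := by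
    intro i hi hne v hv
    by_contra hcon
    refine hne (congrArg Fin.val ((hiso ⟨i, hi⟩).1 ?_))
    refine iso_of_irred ψ hψlc hψne _ ((hρ.sub _).quot _) (fun U hU => ?_)
      (Submodule.Quotient.mk ⟨v, hv⟩) (fun h => hcon ?_)
    · exact subquot_irred ρ (c.inv i) (c.inv (i+1)) (c.lt i hi).le (c.maximal i hi) U hU
    · exact subquot_lift ρ (c.inv i) (c.inv (i+1)) ψ ⟨v, hv⟩ h
  have hup : ∀ i, i ≤ i0.1 → c.W i ≤ sTwistKer ρ ψ := by
    intro i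
    induction i with
    | zero => intro _; rw [c.bot]; exact bot_le
    | succ i ih =>
      intro hi v hv
      obtain ⟨a, ha, hd⟩ := hstep i (by have := i0.2; omega) (by omega) v hv
      have := (sTwistKer ρ ψ).add_mem hd (ih (by omega) ha)
      simpa using this
  have hdown : ∀ j, i0.1 + 1 + j ≤ c.n → ∀ v ∈ c.W (i0.1 + 1 + j),
      ∃ a ∈ c.W (i0.1+1), v - a ∈ sTwistKer ρ ψ := by
    intro j
    induction j with
    | zero => intro _ v hv; exact ⟨v, hv, by simp⟩
    | succ j ih =>
      intro hj v hv
      obtain ⟨a, ha, hd⟩ := hstep (i0.1+1+j) (by omega) (by omega) v hv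
      obtain ⟨a', ha', hd'⟩ := ih (by omega) a ha
      refine ⟨a', ha', ?_⟩
      have := (sTwistKer ρ ψ).add_mem hd hd'
      simpa using this
  obtain ⟨v0, h1, h2⟩ := deg_step ψ hψlc hψne ρ hρ (c.inv i0.1) (c.inv (i0.1 + 1))
    (c.lt i0.1 i0.2) (hup _ le_rfl) ((hiso i0).2 rfl)
  refine ⟨v0, h1, fun v => ?_⟩
  obtain ⟨b, hb, hd⟩ := hdown (c.n - (i0.1+1)) (by have := i0.2; omega) v (by
    rw [show i0.1 + 1 + (c.n - (i0.1+1)) = c.n by have := i0.2; omega, c.top]; trivial)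
  obtain ⟨a, ha⟩ := h2 b hb
  refine ⟨a, ?_⟩
  have h5 := (sTwistKer ρ ψ).add_mem hd ha
  simpa using h5

lemma exists_eigen (ρ : Rep K V) (n : ℕ) : ∀ (N : Submodule ℂ V), Module.Finite ℂ ↥N →
    Module.finrank ℂ ↥N ≤ n → N ≠ ⊥ → (∀ u : Kˣ, ∀ v ∈ N, ρ (xT u) v ∈ N) →
    ∃ v ∈ N, v ≠ 0 ∧ ∀ u : Kˣ, ∃ a : ℂ, ρ (xT u) v = a • v := by
  induction n with
  | zero =>
    intro N _ h hN
    exact absurd (Submodule.finrank_eq_zero.1 (Nat.le_zero.1 h)) hN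
  | succ n ih =>
    intro N hfin hle hN hinv
    by_cases hall : ∀ u : Kˣ, ∃ a : ℂ, ∀ v ∈ N, ρ (xT u) v = a • v
    · obtain ⟨v, hv, hv0⟩ := Submodule.exists_mem_ne_zero_of_ne_bot hN
      exact ⟨v, hv, hv0, fun u => (hall u).imp fun a h => h v hv⟩
    push Not at hall
    obtain ⟨u, hu⟩ := hall
    have : Nontrivial ↥N := Submodule.nontrivial_iff_ne_bot.2 hN
    obtain ⟨a, ha⟩ := Module.End.exists_eigenvalue ((ρ (xT u)).restrict (hinv u))
    obtain ⟨x, hx⟩ := ha.exists_hasEigenvector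
    have hx1 : ρ (xT u) x.1 = a • x.1 := congrArg Subtype.val hx.apply_eq_smul
    have hx0 : x.1 ≠ 0 := fun h => hx.2 (Subtype.ext h)
    set N' : Submodule ℂ V := N ⊓ LinearMap.ker (ρ (xT u) - a • LinearMap.id) with hN'
    have hmem : ∀ v, v ∈ N' ↔ v ∈ N ∧ ρ (xT u) v = a • v := by
      intro v
      simp [hN', sub_eq_zero]
    have hlt : N' < N := by
      refine lt_of_le_of_ne inf_le_left fun h => ?_
      obtain ⟨v, hv, hv1⟩ := hu a
      rw [← h] at hv
      exact hv1 ((hmem v).1 hv).2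
    have hfin' : Module.Finite ℂ ↥N' := Submodule.finiteDimensional_of_le hlt.le
    have := Submodule.finrank_lt_finrank_of_lt hlt
    obtain ⟨v, hv, h0, h1⟩ := ih N' hfin' (by omega)
      (fun h => hx0 (by
        have : x.1 ∈ N' := (hmem _).2 ⟨x.2, hx1⟩
        rw [h] at this
        simpa using this)) (fun w v hv => by
        rw [hmem] at hv ⊢
        refine ⟨hinv w v hv.1, ?_⟩
        rw [← map_smul, ← hv.2, ← Module.End.mul_apply, ← Module.End.mul_apply, ← map_mul,
          ← map_mul]
        congr 2
        ext <;> simp [mul_comm])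
    exact ⟨v, hlt.le hv, h0, h1⟩

lemma bot_of_perfect (ρ : Rep K V) (hρ : IsSmoothRep ρ) (hperf : Perfect ρ)
    (N : Submodule ℂ V) (hfin : Module.Finite ℂ ↥N) (hN : GRep.Invariant ρ N) : N = ⊥ := by
  by_contra hne
  obtain ⟨v, hv, hv0, h⟩ := exists_eigen ρ _ N hfin le_rfl hne (fun u v hv => hN _ _ hv)
  choose a ha using h
  have huniq : ∀ x y : ℂ, x • v = y • v → x = y := fun x y h => smul_left_injective ℂ hv0 h
  have h1 : a 1 = 1 := huniq _ _ (by
    rw [← ha, one_smul, show (xT (1 : Kˣ) : Aff K) = 1 from rfl, map_one]; rfl)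
  have hm : ∀ x y, a (x * y) = a x * a y := fun x y => huniq _ _ (by
    rw [← ha, ← xTHom_apply, map_mul, map_mul, Module.End.mul_apply, xTHom_apply, xTHom_apply,
      ha, map_smul, ha, smul_smul, mul_comm])
  let χ' : Kˣ →* ℂ := ⟨⟨a, h1⟩, hm⟩
  have hχ : ∀ u, ((χ'.toHomUnits u : ℂˣ) : ℂ) = a u := fun u => rfl
  have hsm : SmoothMulChar (χ'.toHomUnits) := by
    have hcont : Continuous (fun u : Kˣ => (xT u : Aff K)) := by
      rw [continuous_induced_rng]
      exact continuous_id.prodMk continuous_const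
    have h2 := (hρ v).preimage hcont
    unfold SmoothMulChar
    convert h2 using 1
    ext u
    simp only [Set.mem_setOf_eq, Set.mem_preimage]
    rw [ha, Units.ext_iff, hχ]
    constructor
    · intro h; rw [h]; simp
    · intro h; exact huniq _ _ (by rw [h]; simp)
  have h3 := hperf _ hsm
  have h4 : v ∈ tEigen ρ (χ'.toHomUnits) := by
    intro u
    rw [hχ]
    exact ha u
  rw [h3] at h4
  exact hv0 (by simpa using h4)

end Aux4

section Statements

open Aff

variable {K : Type*} [NontriviallyNormedField K] [IsUltrametricDist K] [ProperSpace K]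

theorem statement13
    (hchar : (2 : K) ≠ 0)
    (ψ : AddChar K ℂ) (hψlc : IsLocallyConstant (⇑ψ)) (hψne : ψ ≠ 1)
    {X EX V : Type*} [AddCommGroup X] [Module ℂ X] [Module.Finite ℂ X]
    [AddCommGroup EX] [Module ℂ EX] [AddCommGroup V] [Module ℂ V]
    (τX : Representation ℂ Kˣ X) (hτX : TIsSmooth τX) (hXcyc : TCyclic τX)
    (ρE : Rep K EX) (hρE : IsSmoothRep ρE) (cE : CompSeries ρE)
    (hEdeg : cE.deg (SRep ψ hψlc) = 1) (hEperf : Perfect ρE)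
    (hEpi0 : GRep.Iso (piZeroT ρE) τX)
    (ρM : Rep K V) (hρM : IsSmoothRep ρM) (cM : CompSeries ρM)
    (hMdeg : cM.deg (SRep ψ hψlc) = 1)
    (φ : EX →ₗ[ℂ] V) (hφ : GRep.Equivariant ρE ρM φ) :
    ((Module.Finite ℂ ↥(LinearMap.range φ) ∧ LinearMap.range φ ≤ sInv ρM) ∨
      Function.Injective φ) ∧
    (Function.Injective φ →
      Function.Injective (piZeroMap ρE ρM φ hφ) ∧
      GRep.Iso
        (GRep.quot ρM (LinearMap.range φ) (GRep.range_invariant ρE ρM φ hφ))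
        (GRep.quot (piZeroRep ρM) (LinearMap.range (piZeroMap ρE ρM φ hφ))
          (GRep.range_invariant (piZeroRep ρE) (piZeroRep ρM) (piZeroMap ρE ρM φ hφ)
            (piZeroMap_equivariant ρE ρM φ hφ)))) := by
  obtain ⟨v0, hv0, hE⟩ := deg_one ψ hψlc hψne ρE (Sm.of_smooth hρE) cE hEdeg
  obtain ⟨m0, hm0, hM⟩ := deg_one ψ hψlc hψne ρM (Sm.of_smooth hρM) cM hMdeg
  have hES := (Sm.of_smooth hρE).S
  have hMS := (Sm.of_smooth hρM).S
  obtain ⟨eX, -⟩ := hEpi0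
  have hfinq : Module.Finite ℂ (EX ⧸ sCoinvKer ρE) := Module.Finite.equiv eX.symm
  constructor
  · by_cases hN : LinearMap.ker φ ≤ sTwistKer ρE ψ
    · right
      have hinv := GRep.ker_invariant ρE ρM φ hφ
      have htop : sTwistKer (GRep.sub ρE hinv) ψ = ⊤ := by
        rw [eq_top_iff]
        intro v _
        exact twist_exact _ ρE hES ψ hψlc _ (sub_equivariant ρE hinv) Subtype.val_injective
          (hN v.2)
      have htriv := trivial_of_twist (GRep.sub ρE hinv) (hES.sub hinv) ψ hψlc hψne htop
      have hco : sCoinvKer (GRep.sub ρE hinv) = ⊥ := by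
        rw [eq_bot_iff]
        refine Submodule.span_le.2 ?_
        rintro w ⟨b, v, rfl⟩
        rw [htriv]
        simp
      have hinj : Function.Injective
          ((sCoinvKer ρE).mkQ.comp (LinearMap.ker φ).subtype) := by
        rw [injective_iff_map_eq_zero]
        intro v hv
        have h1 : (LinearMap.ker φ).subtype v ∈ sCoinvKer ρE :=
          (Submodule.Quotient.mk_eq_zero _).1 hv
        have h2 := coinv_exact _ ρE hES _ (sub_equivariant ρE hinv) Subtype.val_injective h1
        rw [hco] at h2
        simpa using h2
      have hfin : Module.Finite ℂ ↥(LinearMap.ker φ) := Module.Finite.of_injective _ hinj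
      exact LinearMap.ker_eq_bot.1 (bot_of_perfect ρE hρE hEperf _ hfin hinv)
    · left
      obtain ⟨v, hv, hvD⟩ := SetLike.not_le_iff_exists.1 hN
      obtain ⟨a, ha⟩ := hE v
      have ha0 : a ≠ 0 := by
        rintro rfl
        exact hvD (by simpa using ha)
      have hle : sCoinvKer ρE ≤ LinearMap.ker φ := by
        refine coinv_le_of_sup ρE hES ψ hψlc hψne _ (GRep.ker_invariant ρE ρM φ hφ) fun w => ?_
        obtain ⟨b, hb⟩ := hE w
        refine ⟨(b / a) • v, Submodule.smul_mem _ _ hv, ?_⟩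
        have h1 := (sTwistKer ρE ψ).sub_mem hb ((sTwistKer ρE ψ).smul_mem (b / a) ha)
        convert h1 using 1
        rw [smul_sub, smul_smul, div_mul_cancel₀ b ha0]
        abel
      constructor
      · have h1 : LinearMap.range φ = LinearMap.range ((sCoinvKer ρE).liftQ φ hle) :=
          (Submodule.range_liftQ _ _ _).symm
        rw [h1]
        infer_instance
      · rintro _ ⟨w, rfl⟩ b
        have h1 : ρE (sS b) w - w ∈ LinearMap.ker φ := hle (Submodule.subset_span ⟨b, w, rfl⟩)
        rw [LinearMap.mem_ker, map_sub, sub_eq_zero] at h1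
        rw [← hφ, h1]
  · intro hinj
    have h0 : φ v0 ∉ sTwistKer ρM ψ := fun h =>
      hv0 (twist_exact ρE ρM hMS ψ hψlc φ hφ hinj h)
    obtain ⟨a, ha⟩ := hM (φ v0)
    have ha0 : a ≠ 0 := by
      rintro rfl
      exact h0 (by simpa using ha)
    have hle : sCoinvKer ρM ≤ LinearMap.range φ := by
      refine coinv_le_of_sup ρM hMS ψ hψlc hψne _ (GRep.range_invariant ρE ρM φ hφ) fun w => ?_
      obtain ⟨b, hb⟩ := hM w
      refine ⟨(b / a) • φ v0, Submodule.smul_mem _ _ ⟨v0, rfl⟩, ?_⟩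
      have h1 := (sTwistKer ρM ψ).sub_mem hb ((sTwistKer ρM ψ).smul_mem (b / a) ha)
      convert h1 using 1
      rw [smul_sub, smul_smul, div_mul_cancel₀ b ha0]
      abel
    constructor
    · rw [injective_iff_map_eq_zero]
      intro x hx
      obtain ⟨v, rfl⟩ := Submodule.Quotient.mk_surjective _ x
      have h1 : φ v ∈ sCoinvKer ρM := (Submodule.Quotient.mk_eq_zero _).1 hx
      exact (Submodule.Quotient.mk_eq_zero _).2 (coinv_exact ρE ρM hMS φ hφ hinj h1)
    · have hmem : ∀ m : V, (Submodule.Quotient.mk m : V ⧸ sCoinvKer ρM) ∈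
          LinearMap.range (piZeroMap ρE ρM φ hφ) ↔ m ∈ LinearMap.range φ := by
        intro m
        constructor
        · rintro ⟨x, hx⟩
          obtain ⟨v, rfl⟩ := Submodule.Quotient.mk_surjective _ x
          have h1 : φ v - m ∈ sCoinvKer ρM := (Submodule.Quotient.eq _).1 hx
          have h2 := (LinearMap.range φ).sub_mem ⟨v, rfl⟩ (hle h1)
          simpa using h2
        · rintro ⟨v, rfl⟩
          exact ⟨Submodule.Quotient.mk v, rfl⟩
      let f : (V ⧸ LinearMap.range φ) →ₗ[ℂ]
          ((V ⧸ sCoinvKer ρM) ⧸ LinearMap.range (piZeroMap ρE ρM φ hφ)) :=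
        Submodule.mapQ _ _ (sCoinvKer ρM).mkQ (fun m hm => (hmem m).2 hm)
      have hf : Function.Bijective f := by
        constructor
        · rw [injective_iff_map_eq_zero]
          intro x hx
          obtain ⟨m, rfl⟩ := Submodule.Quotient.mk_surjective _ x
          exact (Submodule.Quotient.mk_eq_zero _).2
            ((hmem m).1 ((Submodule.Quotient.mk_eq_zero _).1 hx))
        · intro y
          obtain ⟨y, rfl⟩ := Submodule.Quotient.mk_surjective _ y
          obtain ⟨m, rfl⟩ := Submodule.Quotient.mk_surjective _ y
          exact ⟨Submodule.Quotient.mk m, rfl⟩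
      refine ⟨LinearEquiv.ofBijective f hf, fun g x => ?_⟩
      obtain ⟨m, rfl⟩ := Submodule.Quotient.mk_surjective _ x
      rfl

end Statements

end PSW
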